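/- arXiv:1404.4856 — 3 statements merged into one kernel-verified Lean document; each statement's English description precedes it below -/
import Mathlib

section
/- Consider the interval total-sum game (G, I) with I = (−∞, 0) ∪ (0, ∞), where G has vertices q_0, q_1, q_2, q_≥, q_<, q_3 with V_∃ = {q_2}, initial vertex q_0, and edges: a self-loop on q_0 of weight +1, an edge q_0 → q_1 of weight 0, a self-loop on q_1 of weight −1, an edge q_1 → q_2 of weight 0, an edge q_2 → q_≥ of weight +1, an edge q_2 → q_< of weight 0, a self-loop on q_≥ of weight +1, a self-loop on q_< of weight −1, edges q_≥ → q_3 and q_< → q_3 of weight 0, and a self-loop on q_3 of weight 0. Then Eve has a winning strategy in this game (ensuring Total(π) ≠ 0 for every consistent play), but she has no finite-memory winning strategy: for every strategy of Eve computed by a finite-state machine there is a consistent play π with Total(π) = 0. -/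
/-! Let `s` be the weight accumulated on reaching `2`. Eve wins by moving to `3` when `0 ≤ s`, after
which the payoff is at least `s + 1`, and to `4` when `s < 0`, after which it is at most `s`. A play
that never reaches `2` ends up looping on `0` or on `1` and has payoff `+∞` or `-∞`.

Against a finite-state machine, Adam loops `a` times on `0` and `b` times on `1`, so that
`s = a - b`. By the pigeonhole principle the machine is in the same state after `a` and after `b`
loops on `0`, for some `a < b`. Following either with `b` loops on `1`, it makes the same move at
`2` for `s = a - b < 0` and for `s = 0`. If it moves to `3`, Adam chooses the first history and
loops on `3` until the weight is `0`; if it moves to `4`, he chooses the second. In both cases he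
then leaves for the sink `5` with total weight `0`. -/

open Filter

/-- A game graph: vertex set `V`, Eve's vertices `Eve`, edge relation `E` (every vertex
has a successor), integer weight function `w`, and initial vertex `init`. -/
structure GameGraph (V : Type) where
  Eve : Set V
  E : V → V → Prop
  w : V → V → ℤ
  init : V
  succ : ∀ v, ∃ u, E v u

namespace GameGraph

variable {V : Type}

/-- `π` is a play starting at vertex `v`. -/
def IsPlayFrom (G : GameGraph V) (v : V) (π : ℕ → V) : Prop :=
  π 0 = v ∧ ∀ i, G.E (π i) (π (i + 1))

/-- `π` is a play (from the initial vertex). -/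
def IsPlay (G : GameGraph V) (π : ℕ → V) : Prop :=
  G.IsPlayFrom G.init π

/-- The prefix `π 0, …, π i` of a play, as a list. -/
def prefixList (π : ℕ → V) (i : ℕ) : List V :=
  List.ofFn (fun j : Fin (i + 1) => π j)

/-- A (history-based) strategy for Eve is legal if it always proposes a successor
of the current (Eve) vertex. -/
def EveLegal (G : GameGraph V) (σ : List V → V) : Prop :=
  ∀ (l : List V) (v : V), v ∈ G.Eve → G.E v (σ (l ++ [v]))

/-- A (history-based) strategy for Adam is legal if it always proposes a successor
of the current (Adam) vertex. -/
def AdamLegal (G : GameGraph V) (σ : List V → V) : Prop :=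
  ∀ (l : List V) (v : V), v ∉ G.Eve → G.E v (σ (l ++ [v]))

/-- The play `π` is consistent with Eve's strategy `σ`. -/
def ConsEve (G : GameGraph V) (σ : List V → V) (π : ℕ → V) : Prop :=
  ∀ i, π i ∈ G.Eve → π (i + 1) = σ (prefixList π i)

/-- The play `π` is consistent with Adam's strategy `σ`. -/
def ConsAdam (G : GameGraph V) (σ : List V → V) (π : ℕ → V) : Prop :=
  ∀ i, π i ∉ G.Eve → π (i + 1) = σ (prefixList π i)

/-- Eve has a winning strategy for the objective `Win`. -/
def EveWins (G : GameGraph V) (Win : (ℕ → V) → Prop) : Prop :=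
  ∃ σ : List V → V, G.EveLegal σ ∧ ∀ π, G.IsPlay π → G.ConsEve σ π → Win π

/-- Adam has a winning strategy: he can ensure the objective `Win` of Eve fails. -/
def AdamWins (G : GameGraph V) (Win : (ℕ → V) → Prop) : Prop :=
  ∃ σ : List V → V, G.AdamLegal σ ∧ ∀ π, G.IsPlay π → G.ConsAdam σ π → ¬ Win π

/-- Consistency with a positional Eve strategy. -/
def ConsEvePos (G : GameGraph V) (f : V → V) (π : ℕ → V) : Prop :=
  ∀ i, π i ∈ G.Eve → π (i + 1) = f (π i)

/-- Consistency with a positional Adam strategy. -/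
def ConsAdamPos (G : GameGraph V) (f : V → V) (π : ℕ → V) : Prop :=
  ∀ i, π i ∉ G.Eve → π (i + 1) = f (π i)

/-- Eve has a positional (memoryless) winning strategy. -/
def EveWinsPos (G : GameGraph V) (Win : (ℕ → V) → Prop) : Prop :=
  ∃ f : V → V, (∀ v ∈ G.Eve, G.E v (f v)) ∧
    ∀ π, G.IsPlay π → G.ConsEvePos f π → Win π

/-- Adam has a positional (memoryless) winning strategy. -/
def AdamWinsPos (G : GameGraph V) (Win : (ℕ → V) → Prop) : Prop :=
  ∃ f : V → V, (∀ v, v ∉ G.Eve → G.E v (f v)) ∧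
    ∀ π, G.IsPlay π → G.ConsAdamPos f π → ¬ Win π

/-- The run of the memory structure `(δ, m)` of a finite-state machine while
reading the play `π`: after `i` steps it has read `π 0, …, π (i-1)`. -/
def memRun {M : Type} (δ : M → V → M) (m : M) (π : ℕ → V) : ℕ → M
  | 0 => m
  | i + 1 => δ (memRun δ m π i) (π i)

/-- Consistency of a play with the finite-memory strategy given by the machine
`(m0, δ, o)`: at step `i`, the machine has memory `memRun δ m0 π i` (having read
`π 0, …, π (i-1)`) and outputs the move `o (memRun δ m0 π i) (π i)`. -/
def ConsEveFM (G : GameGraph V) {M : Type} (m0 : M) (δ : M → V → M)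
    (o : M → V → V) (π : ℕ → V) : Prop :=
  ∀ i, π i ∈ G.Eve → π (i + 1) = o (memRun δ m0 π i) (π i)

/-- Eve has a finite-memory winning strategy, i.e. one computed by a
finite-state machine. -/
def EveWinsFM (G : GameGraph V) (Win : (ℕ → V) → Prop) : Prop :=
  ∃ (M : Type) (_ : Fintype M) (m0 : M) (δ : M → V → M) (o : M → V → V),
    (∀ m, ∀ v ∈ G.Eve, G.E v (o m v)) ∧
    ∀ π, G.IsPlay π → G.ConsEveFM m0 δ o π → Win π

/-- The total weight `w(π[..k])` of the length-`k` prefix of a play. -/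
def partialSum (G : GameGraph V) (π : ℕ → V) (k : ℕ) : ℤ :=
  ∑ i ∈ Finset.range k, G.w (π i) (π (i + 1))

/-- The (liminf) mean-payoff of a play. -/
noncomputable def MP (G : GameGraph V) (π : ℕ → V) : ℝ :=
  liminf (fun k => (G.partialSum π k : ℝ) / (k : ℝ)) atTop

/-- The liminf payoff of a play, in the extended reals. -/
noncomputable def liminfPayoff (G : GameGraph V) (π : ℕ → V) : EReal :=
  liminf (fun i => ((G.w (π i) (π (i + 1)) : ℝ) : EReal)) atTop

/-- The total-sum payoff of a play, in the extended reals. -/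
noncomputable def totalPayoff (G : GameGraph V) (π : ℕ → V) : EReal :=
  liminf (fun k => ((G.partialSum π k : ℝ) : EReal)) atTop

/-- The discounted sum of a play, with discount factor `lam`. -/
noncomputable def DS (G : GameGraph V) (lam : ℝ) (π : ℕ → V) : ℝ :=
  ∑' i : ℕ, lam ^ i * (G.w (π i) (π (i + 1)) : ℝ)

/-- A play of a (min-)parity game is winning for Eve iff the minimal priority
occurring infinitely often is even. -/
def ParityWin (Ω : V → ℕ) (π : ℕ → V) : Prop :=
  ∃ p, Even p ∧ (∀ N, ∃ k, N ≤ k ∧ Ω (π k) = p) ∧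
    ∀ q, (∀ N, ∃ k, N ≤ k ∧ Ω (π k) = q) → p ≤ q

end GameGraph
/-- The game graph of Figure 6: vertices `q₀ = 0`, `q₁ = 1`, `q₂ = 2` (Eve's),
`q₍≥₎ = 3`, `q₍<₎ = 4`, `q₃ = 5`. -/
def G17 : GameGraph (Fin 6) where
  Eve := {2}
  E v u :=
    (v = 0 ∧ (u = 0 ∨ u = 1)) ∨ (v = 1 ∧ (u = 1 ∨ u = 2)) ∨
    (v = 2 ∧ (u = 3 ∨ u = 4)) ∨ (v = 3 ∧ (u = 3 ∨ u = 5)) ∨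
    (v = 4 ∧ (u = 4 ∨ u = 5)) ∨ (v = 5 ∧ u = 5)
  w v u :=
    if v = 0 ∧ u = 0 then 1
    else if v = 1 ∧ u = 1 then -1
    else if v = 2 ∧ u = 3 then 1
    else if v = 3 ∧ u = 3 then 1
    else if v = 4 ∧ u = 4 then -1
    else 0
  init := 0
  succ := by
    intro v
    fin_cases v
    · exact ⟨0, Or.inl ⟨rfl, Or.inl rfl⟩⟩
    · exact ⟨1, Or.inr (Or.inl ⟨rfl, Or.inl rfl⟩)⟩
    · exact ⟨3, Or.inr (Or.inr (Or.inl ⟨rfl, Or.inl rfl⟩))⟩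
    · exact ⟨3, Or.inr (Or.inr (Or.inr (Or.inl ⟨rfl, Or.inl rfl⟩)))⟩
    · exact ⟨4, Or.inr (Or.inr (Or.inr (Or.inr (Or.inl ⟨rfl, Or.inl rfl⟩))))⟩
    · exact ⟨5, Or.inr (Or.inr (Or.inr (Or.inr (Or.inr ⟨rfl, rfl⟩))))⟩

namespace GameGraph

variable {V : Type} (G : GameGraph V) (π : ℕ → V)

lemma partialSum_zero : G.partialSum π 0 = 0 := rfl

lemma partialSum_succ (k : ℕ) :
    G.partialSum π (k + 1) = G.partialSum π k + G.w (π k) (π (k + 1)) :=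
  Finset.sum_range_succ _ k

/-- The weight of a history: the sum of the weights of the edges between consecutive vertices. It is
what a strategy, which sees only the history, knows about the partial sum of the play. -/
def historyWeight (l : List V) : ℤ :=
  (List.zipWith G.w l l.tail).sum

lemma historyWeight_prefixList (k : ℕ) :
    G.historyWeight (prefixList π k) = G.partialSum π k := by
  have hedges : List.zipWith G.w (prefixList π k) (prefixList π k).tail =
      List.ofFn fun j : Fin k => G.w (π j) (π (j + 1)) :=
    List.ext_getElem (by simp [prefixList]) fun i _ _ => by
      simp only [prefixList, List.getElem_zipWith, List.getElem_tail, List.getElem_ofFn]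
  rw [historyWeight, hedges, List.sum_ofFn, partialSum,
    Fin.sum_univ_eq_sum_range fun j => G.w (π j) (π (j + 1))]

variable {G π} {v : V} {N : ℕ}

lemma partialSum_add_of_const {n : ℕ} (h : ∀ j ≤ n, π (N + j) = v) :
    G.partialSum π (N + n) = G.partialSum π N + n * G.w v v := by
  induction n with
  | zero => simp
  | succ n ih =>
    rw [← add_assoc, partialSum_succ, ih fun j hj => h j (by omega), h n n.le_succ,
      add_assoc N, h (n + 1) le_rfl]
    push_cast
    ring

lemma memRun_add_of_const {M : Type} (δ : M → V → M) (m : M) {n : ℕ}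
    (h : ∀ j < n, π (N + j) = v) :
    memRun δ m π (N + n) = (δ · v)^[n] (memRun δ m π N) := by
  induction n with
  | zero => rfl
  | succ n ih =>
    rw [← add_assoc, memRun, ih fun j hj => h j (by omega), h n n.lt_succ_self,
      Function.iterate_succ_apply']

lemma tendsto_partialSum_iff_of_const (h : ∀ k ≥ N, π k = v) (l : Filter ℤ) :
    Tendsto (G.partialSum π) atTop l ↔
      Tendsto (fun n : ℕ => G.partialSum π N + n * G.w v v) atTop l := by
  rw [← tendsto_add_atTop_iff_nat N]
  refine tendsto_congr fun n => ?_
  rw [add_comm, partialSum_add_of_const fun j _ => h (N + j) (N.le_add_right j)]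

lemma totalPayoff_eq_top_of_const (h : ∀ k ≥ N, π k = v) (hv : 0 < G.w v v) :
    G.totalPayoff π = ⊤ := by
  have hsum : Tendsto (G.partialSum π) atTop atTop :=
    (tendsto_partialSum_iff_of_const h _).2 <| tendsto_atTop_add_const_left _ _ <|
      tendsto_natCast_atTop_atTop.atTop_mul_const' hv
  have hreal : Tendsto (fun k => (G.partialSum π k : ℝ)) atTop atTop :=
    tendsto_intCast_atTop_iff.2 hsum
  exact (EReal.tendsto_coe_nhds_top_iff.2 hreal).liminf_eq

lemma totalPayoff_eq_bot_of_const (h : ∀ k ≥ N, π k = v) (hv : G.w v v < 0) :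
    G.totalPayoff π = ⊥ := by
  have hsum : Tendsto (G.partialSum π) atTop atBot :=
    (tendsto_partialSum_iff_of_const h _).2 <| tendsto_atBot_add_const_left _ _ <|
      tendsto_natCast_atTop_atTop.atTop_mul_const_of_neg' hv
  have hreal : Tendsto (fun k => (G.partialSum π k : ℝ)) atTop atBot :=
    tendsto_intCast_atBot_iff.2 hsum
  exact (EReal.tendsto_coe_nhds_bot_iff.2 hreal).liminf_eq

lemma totalPayoff_eq_partialSum_of_const (h : ∀ k ≥ N, π k = v) (hv : G.w v v = 0) :
    G.totalPayoff π = ((G.partialSum π N : ℝ) : EReal) := by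
  have hsum : Tendsto (G.partialSum π) atTop (pure (G.partialSum π N)) :=
    (tendsto_partialSum_iff_of_const h _).2 <| by simp [hv]
  exact (((tendsto_pure_pure (fun n : ℤ => ((n : ℝ) : EReal)) _).comp hsum).mono_right
    (pure_le_nhds _)).liminf_eq

/-- A trap is a set of vertices that no edge leaves, so that neither player can get a play out of
it. -/
def IsTrap (G : GameGraph V) (S : Set V) : Prop :=
  ∀ v ∈ S, ∀ u, G.E v u → u ∈ S

namespace IsTrap

variable {S : Set V}

lemma mem_of_le (hS : G.IsTrap S) (hπ : G.IsPlayFrom v π) (hN : π N ∈ S) {k : ℕ} (hk : N ≤ k) :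
    π k ∈ S := by
  induction k, hk using Nat.le_induction with
  | base => exact hN
  | succ k _ ih => exact hS _ ih _ (hπ.2 k)

lemma partialSum_le_totalPayoff (hS : G.IsTrap S) (hw : ∀ v ∈ S, ∀ u, G.E v u → 0 ≤ G.w v u)
    (hπ : G.IsPlayFrom v π) (hN : π N ∈ S) :
    ((G.partialSum π N : ℝ) : EReal) ≤ G.totalPayoff π := by
  have hmono : ∀ k ≥ N, G.partialSum π N ≤ G.partialSum π k := fun k hk => by
    induction k, hk using Nat.le_induction with
    | base => rfl
    | succ k hk ih =>
      rw [partialSum_succ]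
      exact le_add_of_le_of_nonneg ih (hw _ (hS.mem_of_le hπ hN hk) _ (hπ.2 k))
  refine le_liminf_of_le (by isBoundedDefault) ?_
  filter_upwards [eventually_ge_atTop N] with k hk
  exact_mod_cast hmono k hk

lemma totalPayoff_le_partialSum (hS : G.IsTrap S) (hw : ∀ v ∈ S, ∀ u, G.E v u → G.w v u ≤ 0)
    (hπ : G.IsPlayFrom v π) (hN : π N ∈ S) :
    G.totalPayoff π ≤ ((G.partialSum π N : ℝ) : EReal) := by
  have hanti : ∀ k ≥ N, G.partialSum π k ≤ G.partialSum π N := fun k hk => by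
    induction k, hk using Nat.le_induction with
    | base => rfl
    | succ k hk ih =>
      rw [partialSum_succ]
      exact add_le_of_le_of_nonpos ih (hw _ (hS.mem_of_le hπ hN hk) _ (hπ.2 k))
  refine liminf_le_of_frequently_le' (Eventually.frequently ?_)
  filter_upwards [eventually_ge_atTop N] with k hk
  exact_mod_cast hanti k hk

end IsTrap

end GameGraph

namespace G17

open GameGraph

section Eve

variable {π : ℕ → Fin 6}

lemma totalPayoff_ne_zero_of_forall_ne_two (hπ : G17.IsPlay π) (h2 : ∀ i, π i ≠ 2) :
    G17.totalPayoff π ≠ 0 := by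
  by_cases h1 : ∃ N, π N = 1
  · obtain ⟨N, hN⟩ := h1
    have hconst : ∀ k ≥ N, π k = 1 := fun k hk => by
      induction k, hk using Nat.le_induction with
      | base => exact hN
      | succ k _ ih => simpa [G17, ih, h2 (k + 1)] using hπ.2 k
    have hloop : G17.w 1 1 < 0 := by decide
    simp [totalPayoff_eq_bot_of_const hconst hloop]
  · have hconst : ∀ k ≥ 0, π k = 0 := fun k hk => by
      induction k, hk using Nat.le_induction with
      | base => exact hπ.1
      | succ k _ ih => simpa [G17, ih, not_exists.1 h1 (k + 1)] using hπ.2 k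
    have hloop : 0 < G17.w 0 0 := by decide
    simp [totalPayoff_eq_top_of_const hconst hloop]

lemma partialSum_le_totalPayoff_of_eq_three (hπ : G17.IsPlay π) {N : ℕ} (hN : π N = 3) :
    ((G17.partialSum π N : ℝ) : EReal) ≤ G17.totalPayoff π := by
  have htrap : G17.IsTrap {3, 5} := by simp [IsTrap, G17]
  have hw : ∀ v ∈ ({3, 5} : Set (Fin 6)), ∀ u, G17.E v u → 0 ≤ G17.w v u := by simp [G17]
  exact htrap.partialSum_le_totalPayoff hw hπ (by simp [hN])

lemma totalPayoff_le_partialSum_of_eq_four (hπ : G17.IsPlay π) {N : ℕ} (hN : π N = 4) :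
    G17.totalPayoff π ≤ ((G17.partialSum π N : ℝ) : EReal) := by
  have htrap : G17.IsTrap {4, 5} := by simp [IsTrap, G17]
  have hw : ∀ v ∈ ({4, 5} : Set (Fin 6)), ∀ u, G17.E v u → G17.w v u ≤ 0 := by simp [G17]
  exact htrap.totalPayoff_le_partialSum hw hπ (by simp [hN])

/-- Eve's winning strategy: at `2`, move to `3` or to `4` according to the sign of the weight of
the history. -/
def signStrategy (l : List (Fin 6)) : Fin 6 :=
  if 0 ≤ G17.historyWeight l then 3 else 4

lemma eveLegal_signStrategy : G17.EveLegal signStrategy := by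
  rintro l v rfl
  unfold signStrategy
  split_ifs <;> simp [G17]

lemma totalPayoff_ne_zero_of_consEve_signStrategy (hπ : G17.IsPlay π)
    (hσ : G17.ConsEve signStrategy π) : G17.totalPayoff π ≠ 0 := by
  by_cases h2 : ∃ i, π i = 2
  · obtain ⟨i, hi⟩ := h2
    have hmove : π (i + 1) = if 0 ≤ G17.partialSum π i then 3 else 4 := by
      rw [hσ i hi, signStrategy, historyWeight_prefixList]
    have hsum := partialSum_succ G17 π i
    split_ifs at hmove with hs
    · have hpos : 0 < G17.partialSum π (i + 1) := by
        rw [hsum, hi, hmove]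
        exact add_pos_of_nonneg_of_pos hs (by decide)
      refine (lt_of_lt_of_le ?_ (partialSum_le_totalPayoff_of_eq_three hπ hmove)).ne'
      exact_mod_cast hpos
    · have hneg : G17.partialSum π (i + 1) < 0 := by
        rw [hsum, hi, hmove]
        exact add_neg_of_neg_of_nonpos (not_le.1 hs) (by decide)
      refine ((totalPayoff_le_partialSum_of_eq_four hπ hmove).trans_lt ?_).ne
      exact_mod_cast hneg
  · exact totalPayoff_ne_zero_of_forall_ne_two hπ (not_exists.1 h2)

end Eve

section Adam

/-- Adam's counterplay: loop `a` times on `0` and `b` times on `1`, go through `2` to `v`, loop `c`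
times there and end in the sink `5`. It is a play when `v` is `3` or `4`. -/
def counterPlay (a b c : ℕ) (v : Fin 6) (k : ℕ) : Fin 6 :=
  if k ≤ a then 0
  else if k ≤ a + b + 1 then 1
  else if k = a + b + 2 then 2
  else if k ≤ a + b + 3 + c then v
  else 5

variable {a b c : ℕ} {v : Fin 6} {k : ℕ}

lemma counterPlay_eq_zero (h : k ≤ a) : counterPlay a b c v k = 0 :=
  if_pos h

lemma counterPlay_eq_one (h : a < k) (h' : k ≤ a + b + 1) : counterPlay a b c v k = 1 := by
  grind [counterPlay]

lemma counterPlay_eq_two : counterPlay a b c v (a + b + 2) = 2 := by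
  grind [counterPlay]

lemma counterPlay_eq_vertex (h : a + b + 2 < k) (h' : k ≤ a + b + 3 + c) :
    counterPlay a b c v k = v := by
  grind [counterPlay]

lemma counterPlay_eq_five (h : a + b + 3 + c < k) : counterPlay a b c v k = 5 := by
  grind [counterPlay]

lemma eq_of_counterPlay_eq_two (hv : v ≠ 2) (h : counterPlay a b c v k = 2) :
    k = a + b + 2 := by
  unfold counterPlay at h
  split_ifs at h <;> first | assumption | contradiction

lemma isPlay_counterPlay (hv : v = 3 ∨ v = 4) : G17.IsPlay (counterPlay a b c v) := by
  refine ⟨counterPlay_eq_zero a.zero_le, fun i => ?_⟩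
  unfold counterPlay
  rcases hv with rfl | rfl <;> split_ifs <;> first | omega | simp [G17]

lemma partialSum_counterPlay :
    G17.partialSum (counterPlay a b c v) (a + b + 2) = a - b := by
  have hloop0 : G17.partialSum (counterPlay a b c v) a = a * G17.w 0 0 := by
    rw [← zero_add a, partialSum_add_of_const fun j hj => counterPlay_eq_zero (by omega),
      partialSum_zero, zero_add, zero_add]
  have hloop1 : G17.partialSum (counterPlay a b c v) (a + 1 + b) =
      a * G17.w 0 0 + G17.w 0 1 + b * G17.w 1 1 := by
    rw [partialSum_add_of_const fun j hj => counterPlay_eq_one (by omega) (by omega),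
      partialSum_succ, hloop0, counterPlay_eq_zero le_rfl,
      counterPlay_eq_one (by omega) (by omega)]
  rw [show a + b + 2 = a + 1 + b + 1 by ring, partialSum_succ, hloop1,
    counterPlay_eq_one (by omega) (by omega), show a + 1 + b + 1 = a + b + 2 by ring,
    counterPlay_eq_two]
  simp [G17, sub_eq_add_neg]

lemma totalPayoff_counterPlay :
    G17.totalPayoff (counterPlay a b c v) =
      ((a - b + G17.w 2 v + c * G17.w v v : ℤ) : ℝ) := by
  have hloop : G17.partialSum (counterPlay a b c v) (a + b + 3 + c) =
      a - b + G17.w 2 v + c * G17.w v v := by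
    rw [partialSum_add_of_const fun j hj => counterPlay_eq_vertex (by omega) (by omega),
      partialSum_succ, partialSum_counterPlay, counterPlay_eq_two,
      counterPlay_eq_vertex (by omega) (by omega)]
  have hsink : ∀ u, G17.w u 5 = 0 := by decide
  rw [totalPayoff_eq_partialSum_of_const
      (fun k (hk : k ≥ a + b + 3 + c + 1) => counterPlay_eq_five (by omega)) (hsink 5),
    partialSum_succ, hloop, counterPlay_eq_vertex (by omega) le_rfl,
    counterPlay_eq_five (by omega), hsink, add_zero]

lemma memRun_counterPlay {M : Type} (δ : M → Fin 6 → M) (m : M) :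
    memRun δ m (counterPlay a b c v) (a + b + 2) =
      (δ · 1)^[b + 1] ((δ · 0)^[a + 1] m) := by
  have h0 : memRun δ m (counterPlay a b c v) (a + 1) = (δ · 0)^[a + 1] m := by
    simpa [memRun] using memRun_add_of_const (N := 0) (n := a + 1) δ m fun j hj =>
      counterPlay_eq_zero (a := a) (b := b) (c := c) (v := v) (by omega)
  rw [show a + b + 2 = a + 1 + (b + 1) by ring,
    memRun_add_of_const δ m fun j hj => counterPlay_eq_one (by omega) (by omega), h0]

lemma consEveFM_counterPlay {M : Type} {m : M} {δ : M → Fin 6 → M} {o : M → Fin 6 → Fin 6}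
    (hv : v ≠ 2) (ho : o ((δ · 1)^[b + 1] ((δ · 0)^[a + 1] m)) 2 = v) :
    G17.ConsEveFM m δ o (counterPlay a b c v) := by
  intro i hi
  obtain rfl := eq_of_counterPlay_eq_two hv hi
  rw [memRun_counterPlay, counterPlay_eq_two, ho,
    counterPlay_eq_vertex (by omega) (by omega)]

lemma exists_consEveFM_totalPayoff_eq_zero {M : Type} [Finite M] (m : M) (δ : M → Fin 6 → M)
    {o : M → Fin 6 → Fin 6} (ho : ∀ m, ∀ v ∈ G17.Eve, G17.E v (o m v)) :
    ∃ π, G17.IsPlay π ∧ G17.ConsEveFM m δ o π ∧ G17.totalPayoff π = 0 := by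
  obtain ⟨a, b, hab, hstate : (δ · 0)^[a + 1] m = (δ · 0)^[b + 1] m⟩ :=
    Set.finite_univ.exists_lt_map_eq_of_forall_mem fun n : ℕ => Set.mem_univ ((δ · 0)^[n + 1] m)
  have hmove : o ((δ · 1)^[b + 1] ((δ · 0)^[b + 1] m)) 2 = 3 ∨
      o ((δ · 1)^[b + 1] ((δ · 0)^[b + 1] m)) 2 = 4 := by
    simpa [G17] using ho ((δ · 1)^[b + 1] ((δ · 0)^[b + 1] m)) 2 rfl
  rcases hmove with h3 | h4
  · -- The edge from `2` to `3` already contributes `1`, hence one loop fewer than `b - a`.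
    refine ⟨counterPlay a b (b - a - 1) 3, isPlay_counterPlay (.inl rfl),
      consEveFM_counterPlay (by decide) (hstate ▸ h3), ?_⟩
    have hweight : (a - b + G17.w 2 3 + (b - a - 1 : ℕ) * G17.w 3 3 : ℤ) = 0 := by
      have hedge : G17.w 2 3 = 1 := by decide
      have hloop : G17.w 3 3 = 1 := by decide
      rw [hedge, hloop]
      omega
    rw [totalPayoff_counterPlay, hweight, Int.cast_zero, EReal.coe_zero]
  · refine ⟨counterPlay b b 0 4, isPlay_counterPlay (.inr rfl),
      consEveFM_counterPlay (by decide) h4, ?_⟩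
    rw [totalPayoff_counterPlay]
    simp [G17]

end Adam

end G17

/-- In the interval total-sum game of Figure 6 with
`I = (−∞, 0) ∪ (0, ∞)`, Eve has a winning strategy (ensuring `Total(π) ≠ 0`), but no
finite-memory winning strategy. -/
theorem stmt17 :
    G17.EveWins (fun π => G17.totalPayoff π ≠ (0 : EReal)) ∧
      ¬ G17.EveWinsFM (fun π => G17.totalPayoff π ≠ (0 : EReal)) := by
  refine ⟨⟨G17.signStrategy, G17.eveLegal_signStrategy,
    fun _ => G17.totalPayoff_ne_zero_of_consEve_signStrategy⟩, ?_⟩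
  rintro ⟨M, _, m, δ, o, ho, hwin⟩
  obtain ⟨π, hπ, hcons, hzero⟩ := G17.exists_consEveFM_totalPayoff_eq_zero m δ ho
  exact hwin π hπ hcons hzero
end

section
/- Let (G, I) be an interval total-sum game where I is a finite union of real intervals such that I ∩ ℤ is finite. If Eve has a winning strategy (a strategy such that every consistent play π satisfies Total(π) ∈ I) then she has a finite-memory winning strategy, i.e., a winning strategy computed by a finite-state machine. -/
open Filter

/-!
Partial sums are integers, so Eve wins a play iff the limit inferior of its partial sums is attained
infinitely often and belongs to the finite set `A = I ∩ ℤ`. In the product of the game with `ℤ`,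
which records the current total weight, this is a condition on positions; clamping the weight to a
finite interval around `A` turns it into a parity condition, although the arena stays infinite.

Such a condition has positional winning strategies on every arena. Fix a winning strategy. For a
level `p` outside `A`, no consistent play visits `p` infinitely often while staying at levels at
least `p`, which gives every consistent history an ordinal rank for `p`. Playing at each position as
after the history leading to it whose ranks are lexicographically least is winning.

Under a positional winning strategy, every play of the product returns to a weight in `A`, of which
there are finitely many, so by König's lemma only finitely many positions are reachable. A finite
machine that stores the current position executes the strategy.
-/

section AttainsLiminf

variable {α : Type*} {u : ℕ → α} {a b : α}

/-- `a` is the limit inferior of `u` and occurs infinitely often in `u`. In a finite linear order,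
`a` is then the least value occurring infinitely often, and `∃ a ∈ A, AttainsLiminf u a` is a parity
condition with `A` in place of the set of even priorities. -/
def AttainsLiminf [Preorder α] (u : ℕ → α) (a : α) : Prop :=
  (∃ᶠ i in atTop, u i = a) ∧ ∀ᶠ i in atTop, a ≤ u i

lemma AttainsLiminf.unique [PartialOrder α] (ha : AttainsLiminf u a) (hb : AttainsLiminf u b) :
    a = b := by
  obtain ⟨i, hib, hai⟩ := (hb.1.and_eventually ha.2).exists
  obtain ⟨j, hja, hbj⟩ := (ha.1.and_eventually hb.2).exists
  exact le_antisymm (hib ▸ hai) (hja ▸ hbj)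

lemma attainsLiminf_shift_iff [Preorder α] (n : ℕ) :
    AttainsLiminf (fun i => u (i + n)) a ↔ AttainsLiminf u a := by
  unfold AttainsLiminf
  conv_rhs => rw [← map_add_atTop_eq_nat n, frequently_map, eventually_map]

lemma exists_attainsLiminf [LinearOrder α] [Finite α] (u : ℕ → α) : ∃ a, AttainsLiminf u a := by
  have hrec : {a | ∃ᶠ i in atTop, u i = a}.Nonempty := by
    by_contra! hempty
    have hne : ∀ a, ∀ᶠ i in atTop, u i ≠ a := fun a =>
      not_frequently.1 (Set.eq_empty_iff_forall_notMem.1 hempty a)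
    obtain ⟨i, hi⟩ := (eventually_all.2 hne).exists
    exact hi _ rfl
  obtain ⟨a, ha, hmin⟩ := Set.exists_min_image _ id (Set.toFinite _) hrec
  have hne : ∀ b, ∀ᶠ i in atTop, b < a → u i ≠ b := fun b => by
    rw [eventually_imp_distrib_left]
    exact fun hb => not_frequently.1 fun hfreq => (hmin b hfreq).not_gt hb
  refine ⟨a, ha, (eventually_all.2 hne).mono fun i hi => ?_⟩
  exact not_lt.1 fun hlt => hi _ hlt rfl

lemma AttainsLiminf.liminf_eq [CompleteLinearOrder α] (h : AttainsLiminf u a) :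
    liminf u atTop = a :=
  le_antisymm (liminf_le_of_frequently_le' (h.1.mono fun _ => Eq.le))
    (le_liminf_of_le (by isBoundedDefault) h.2)

lemma AttainsLiminf.comp_strictMono {β : Type*} [PartialOrder α] [Preorder β] {f : α → β}
    (hf : StrictMono f) (h : AttainsLiminf u a) : AttainsLiminf (f ∘ u) (f a) :=
  ⟨h.1.mono fun _ => congrArg f, h.2.mono fun _ hi => hf.monotone hi⟩

lemma attainsLiminf_projIcc_iff [LinearOrder α] {lo hi : α} (hle : lo ≤ hi) (l : Set.Icc lo hi)
    (hl : (l : α) ∈ Set.Ioo lo hi) :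
    AttainsLiminf (Set.projIcc lo hi hle ∘ u) l ↔ AttainsLiminf u l := by
  have heq (x : α) : Set.projIcc lo hi hle x = l ↔ x = l := by
    rw [Subtype.ext_iff, Set.coe_projIcc]
    grind
  have hge (x : α) : l ≤ Set.projIcc lo hi hle x ↔ (l : α) ≤ x := by
    rw [← Subtype.coe_le_coe, Set.coe_projIcc]
    grind
  simp only [AttainsLiminf, Function.comp_apply, heq, hge]

lemma exists_attainsLiminf_projIcc_iff [LinearOrder α] {lo hi : α} (hle : lo ≤ hi) {A : Set α}
    (hA : A ⊆ Set.Ioo lo hi) :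
    (∃ l ∈ ((↑) ⁻¹' A : Set (Set.Icc lo hi)), AttainsLiminf (Set.projIcc lo hi hle ∘ u) l) ↔
      ∃ a ∈ A, AttainsLiminf u a := by
  constructor
  · rintro ⟨l, hl, h⟩
    exact ⟨l, hl, (attainsLiminf_projIcc_iff hle l (hA hl)).1 h⟩
  · rintro ⟨a, ha, h⟩
    exact ⟨⟨a, Set.Ioo_subset_Icc_self (hA ha)⟩, ha, (attainsLiminf_projIcc_iff hle _ (hA ha)).2 h⟩

end AttainsLiminf

lemma attainsLiminf_of_liminf_intCast_eq {u : ℕ → ℤ} {x : ℝ}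
    (hx : liminf (fun i => ((u i : ℝ) : EReal)) atTop = x) : AttainsLiminf u ⌈x⌉ := by
  have hlower : ∀ᶠ i in atTop, ⌈x⌉ ≤ u i := by
    have hlt : ((⌈x⌉ - 1 : ℝ) : EReal) < liminf (fun i => ((u i : ℝ) : EReal)) atTop := by
      rw [hx, EReal.coe_lt_coe_iff]
      linarith [Int.ceil_lt_add_one x]
    filter_upwards [eventually_lt_of_lt_liminf hlt] with i hi
    rw [EReal.coe_lt_coe_iff] at hi
    exact Int.sub_one_lt_iff.1 (by exact_mod_cast hi)
  have hupper : ∃ᶠ i in atTop, u i ≤ ⌈x⌉ := by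
    have hlt : liminf (fun i => ((u i : ℝ) : EReal)) atTop < ((⌈x⌉ + 1 : ℝ) : EReal) := by
      rw [hx, EReal.coe_lt_coe_iff]
      linarith [Int.le_ceil x]
    refine (frequently_lt_of_liminf_lt (by isBoundedDefault) hlt).mono fun i hi => ?_
    rw [EReal.coe_lt_coe_iff] at hi
    exact Int.lt_add_one_iff.1 (by exact_mod_cast hi)
  exact ⟨(hupper.and_eventually hlower).mono fun i hi => le_antisymm hi.1 hi.2, hlower⟩

lemma exists_liminf_intCast_eq_iff {u : ℕ → ℤ} {I : Set ℝ} :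
    (∃ x : ℝ, x ∈ I ∧ liminf (fun i => ((u i : ℝ) : EReal)) atTop = x) ↔
      ∃ a ∈ ((↑) ⁻¹' I : Set ℤ), AttainsLiminf u a := by
  have hcast : StrictMono fun n : ℤ => ((n : ℝ) : EReal) :=
    EReal.coe_strictMono.comp Int.cast_strictMono
  constructor
  · rintro ⟨x, hxI, hx⟩
    have hatt := attainsLiminf_of_liminf_intCast_eq hx
    have hceil : x = ⌈x⌉ :=
      EReal.coe_injective (hx.symm.trans (hatt.comp_strictMono hcast).liminf_eq)
    rw [hceil] at hxI
    exact ⟨⌈x⌉, hxI, hatt⟩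
  · rintro ⟨a, ha, hatt⟩
    exact ⟨a, ha, (hatt.comp_strictMono hcast).liminf_eq⟩

/-! ### Paths and ranks -/

section Paths

variable {α : Type*} {r : α → α → Prop} {a : α}

lemma exists_path_extension {x : ℕ → α} (ha : Relation.ReflTransGen r a (x 0))
    (hx : ∀ i, r (x i) (x (i + 1))) :
    ∃ y : ℕ → α, y 0 = a ∧ (∀ i, r (y i) (y (i + 1))) ∧ ∃ n, ∀ i, y (i + n) = x i := by
  induction ha using Relation.ReflTransGen.head_induction_on with
  | refl => exact ⟨x, rfl, hx, 0, fun _ => rfl⟩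
  | @head a b hab _ ih =>
    obtain ⟨y, rfl, hy, n, hn⟩ := ih
    exact ⟨fun i => Nat.casesOn i a y, rfl, fun i => Nat.casesOn i hab hy, n + 1, hn⟩

/-- The points from which some `r`-path of exactly `n` steps ends in `s`. -/
def stepsInto (r : α → α → Prop) (s : Set α) : ℕ → Set α
  | 0 => s
  | n + 1 => {x | ∃ y ∈ stepsInto r s n, r x y}

lemma exists_mem_stepsInto {s : Set α} {x y : α} (hxy : Relation.ReflTransGen r x y)
    (hy : y ∈ s) : ∃ n, x ∈ stepsInto r s n := by
  induction hxy using Relation.ReflTransGen.head_induction_on with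
  | refl => exact ⟨0, hy⟩
  | head hxz _ ih =>
    obtain ⟨n, hn⟩ := ih
    exact ⟨n + 1, _, hn, hxz⟩

lemma exists_path_frequently_mem {s : Set α} (hs : s.Nonempty)
    (hnext : ∀ x ∈ s, ∃ y ∈ s, Relation.TransGen r x y) :
    ∃ x : ℕ → α, (∀ i, r (x i) (x (i + 1))) ∧ ∃ᶠ i in atTop, x i ∈ s := by
  have hstep (z : {z : α × ℕ // z.1 ∈ stepsInto r s z.2}) :
      ∃ z' : {z : α × ℕ // z.1 ∈ stepsInto r s z.2},
        r z.1.1 z'.1.1 ∧ (z.1.2 ≠ 0 → z'.1.2 + 1 = z.1.2) := by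
    obtain ⟨⟨x, _ | n⟩, hx⟩ := z
    · obtain ⟨y, hy, hxy⟩ := hnext x hx
      obtain ⟨z, hxz, hzy⟩ := Relation.TransGen.head'_iff.1 hxy
      obtain ⟨n, hn⟩ := exists_mem_stepsInto hzy hy
      exact ⟨⟨(z, n), hn⟩, hxz, fun h => absurd rfl h⟩
    · obtain ⟨y, hy, hxy⟩ := hx
      exact ⟨⟨(y, n), hy⟩, hxy, fun _ => rfl⟩
  choose next hnext_step hnext_count using hstep
  obtain ⟨x₀, hx₀⟩ := hs
  let z (i : ℕ) := next^[i] ⟨(x₀, 0), hx₀⟩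
  have hz (i : ℕ) : z (i + 1) = next (z i) := Function.iterate_succ_apply' next i _
  have hreach (n : ℕ) : ∀ i, (z i).1.2 = n → ∃ j ≥ i, (z j).1.1 ∈ s := by
    induction n with
    | zero =>
      intro i hi
      have hmem := (z i).2
      rw [hi] at hmem
      exact ⟨i, le_rfl, hmem⟩
    | succ n ih =>
      intro i hi
      have hcount := hnext_count (z i) (by omega)
      rw [← hz] at hcount
      obtain ⟨j, hj, hjs⟩ := ih (i + 1) (by omega)
      exact ⟨j, by omega, hjs⟩
  refine ⟨fun i => (z i).1.1, fun i => ?_, frequently_atTop.2 fun i => hreach _ i rfl⟩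
  change r (z i).1.1 (z (i + 1)).1.1
  rw [hz]
  exact hnext_step (z i)

/-- The rank of `x` in the well-founded relation "some nonempty path from `x` to `y` ends in `s`"
bounds the number of visits to `s` still to come. -/
lemma exists_rank_of_not_frequently_mem.{v} {α : Type v} {r : α → α → Prop} {s : Set α}
    (h : ∀ x : ℕ → α, (∀ i, r (x i) (x (i + 1))) → ¬ ∃ᶠ i in atTop, x i ∈ s) :
    ∃ θ : α → Ordinal.{v}, ∀ x y, r x y → θ y ≤ θ x ∧ (y ∈ s → θ y < θ x) := by
  let visit (y x : α) : Prop := Relation.TransGen r x y ∧ y ∈ s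
  have hwf : WellFounded visit := by
    refine ⟨fun x => by_contra fun hx => ?_⟩
    have hbad (x : α) (hx : ¬ Acc visit x) :
        ∃ y ∈ {y ∈ s | ¬ Acc visit y}, Relation.TransGen r x y :=
      let ⟨y, hy, hxy, hys⟩ := exists_not_acc_lt_of_not_acc hx
      ⟨y, ⟨hys, hy⟩, hxy⟩
    obtain ⟨y, hy, -⟩ := hbad x hx
    obtain ⟨z, hz, hfreq⟩ := exists_path_frequently_mem ⟨y, hy⟩ fun x hx => hbad x hx.2
    exact h z hz (hfreq.mono fun _ hi => hi.1)
  have : IsWellFounded α visit := ⟨hwf⟩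
  refine ⟨IsWellFounded.rank visit, fun x y hxy => ⟨?_, fun hy => ?_⟩⟩
  · rw [IsWellFounded.rank_eq visit y]
    refine Ordinal.iSup_le fun ⟨z, hyz, hz⟩ => ?_
    exact Order.succ_le_of_lt (IsWellFounded.rank_lt_of_rel ⟨.head hxy hyz, hz⟩)
  · exact IsWellFounded.rank_lt_of_rel ⟨.single hxy, hy⟩

end Paths

/-- Signatures: the entry `θ · p` bounds the visits to the level `p` made before the first visit to
a level below `p`. -/
lemma exists_signature.{v} {H : Type v} {L : Type*} [PartialOrder L] {r : H → H → Prop}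
    {lev : H → L} {A : Set L}
    (hr : ∀ x : ℕ → H, (∀ i, r (x i) (x (i + 1))) → ∃ p ∈ A, AttainsLiminf (lev ∘ x) p) :
    ∃ θ : H → L → Ordinal.{v}, ∀ x y, r x y →
      (∀ p ≤ lev y, θ y p ≤ θ x p) ∧ (lev y ∉ A → θ y (lev y) < θ x (lev y)) := by
  have hrank (p : L) : ∃ θ : H → Ordinal.{v}, ∀ x y, r x y → p ≤ lev y →
      θ y ≤ θ x ∧ (p ∉ A → lev y = p → θ y < θ x) := by
    by_cases hp : p ∈ A
    · exact ⟨fun _ => 0, fun _ _ _ _ => ⟨le_rfl, fun hpA => absurd hp hpA⟩⟩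
    have hfin (x : ℕ → H) (hx : ∀ i, r (x i) (x (i + 1)) ∧ p ≤ lev (x (i + 1))) :
        ¬ ∃ᶠ i in atTop, x i ∈ {h | lev h = p} := by
      intro hfreq
      obtain ⟨q, hq, hattq⟩ := hr x fun i => (hx i).1
      have hattp : AttainsLiminf (lev ∘ x) p :=
        ⟨hfreq, (eventually_ge_atTop 1).mono fun i hi => by
          simpa only [Function.comp_apply, Nat.sub_add_cancel hi] using (hx (i - 1)).2⟩
      exact hp (hattp.unique hattq ▸ hq)
    obtain ⟨θ, hθ⟩ := exists_rank_of_not_frequently_mem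
      (r := fun x y => r x y ∧ p ≤ lev y) hfin
    exact ⟨θ, fun x y hxy hpy => (hθ x y ⟨hxy, hpy⟩).imp_right fun hlt _ => hlt⟩
  choose θ hθ using hrank
  exact ⟨fun x p => θ p x, fun x y hxy =>
    ⟨fun p hp => (hθ p x y hxy hp).1, fun hy => (hθ _ x y hxy le_rfl).2 hy rfl⟩⟩

section Signatures

variable {L α : Type*} [LinearOrder L] [LinearOrder α]

lemma toLex_restrict_Iic_le {a b : L → α} (hab : toLex a ≤ toLex b) (q : L) :
    toLex (fun p : Set.Iic q => a p) ≤ toLex (fun p : Set.Iic q => b p) := by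
  obtain heq | ⟨p, hbelow, hp⟩ := hab.eq_or_lt
  · rw [toLex_inj.1 heq]
  · obtain hpq | hqp := le_or_gt p q
    · exact le_of_lt ⟨⟨p, hpq⟩, fun j hj => hbelow j hj, hp⟩
    · exact le_of_eq (congrArg toLex (funext fun j => hbelow j (j.2.trans_lt hqp)))

lemma eventually_eq_of_eventually_le [WellFoundedLT α] {u : ℕ → α}
    (hu : ∀ᶠ i in atTop, u (i + 1) ≤ u i) : ∀ᶠ i in atTop, u (i + 1) = u i := by
  obtain ⟨m, hm⟩ := eventually_atTop.1 hu
  have hanti : Antitone fun i => u (i + m) :=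
    antitone_nat_of_succ_le fun i => by
      simpa only [Nat.add_right_comm i 1 m] using hm (i + m) (Nat.le_add_left m i)
  obtain ⟨n, hn⟩ := WellFoundedLT.antitone_chain_condition hanti
  filter_upwards [eventually_ge_atTop (n + m)] with i hi
  obtain ⟨k, rfl⟩ := Nat.exists_eq_add_of_le' (le_of_add_le_right hi)
  have hnk : n ≤ k := by omega
  rw [Nat.add_right_comm]
  exact (hn (k + 1) (by omega)).symm.trans (hn k hnk)

/-- If the least recurring level `q` were outside `A`, the entries of `m i` at the levels up to `q`,
compared lexicographically, would eventually not increase, yet decrease infinitely often. -/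
lemma exists_attainsLiminf_of_signature [Finite L] [WellFoundedLT α] {A : Set L} {c : ℕ → L}
    {m s : ℕ → L → α} (hlex : ∀ i, toLex (m (i + 1)) ≤ toLex (s i))
    (hle : ∀ i, ∀ p ≤ c i, s i p ≤ m i p) (hlt : ∀ i, c i ∉ A → s i (c i) < m i (c i)) :
    ∃ q ∈ A, AttainsLiminf c q := by
  obtain ⟨q, hfreq, hge⟩ := exists_attainsLiminf c
  refine ⟨q, by_contra fun hq => ?_, hfreq, hge⟩
  let upto (a : L → α) : Lex (Set.Iic q → α) := toLex fun p => a p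
  have hupto (i : ℕ) : upto (m (i + 1)) ≤ upto (s i) := toLex_restrict_Iic_le (hlex i) q
  have hanti : ∀ᶠ i in atTop, upto (m (i + 1)) ≤ upto (m i) :=
    hge.mono fun i hi => (hupto i).trans (Pi.toLex_monotone fun p => hle i p (p.2.trans hi))
  have hconst : ∀ᶠ i in atTop, upto (m (i + 1)) = upto (m i) :=
    eventually_eq_of_eventually_le (u := fun i => upto (m i)) hanti
  obtain ⟨i, rfl, heq⟩ := (hfreq.and_eventually hconst).exists
  have hdrop : upto (s i) < upto (m i) :=
    Pi.toLex_strictMono (Pi.lt_def.2 ⟨fun p => hle i p p.2, ⟨c i, Set.self_mem_Iic⟩, hlt i hq⟩)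
  exact ((hupto i).trans_lt hdrop).ne heq

end Signatures

/-! ### Positional strategies -/

namespace GameGraph

variable {V : Type} (G : GameGraph V)

/-- One move of a game in which Eve follows the strategy `σ`. A history is recorded as the pair of
the list of its past vertices and its present vertex. -/
def HistMove (σ : List V → V) (a b : List V × V) : Prop :=
  b.1 = a.1 ++ [a.2] ∧ G.E a.2 b.2 ∧ (a.2 ∈ G.Eve → b.2 = σ b.1)

/-- The histories consistent with Eve's strategy `σ`. -/
def IsHist (σ : List V → V) (a : List V × V) : Prop :=
  Relation.ReflTransGen (G.HistMove σ) ([], G.init) a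

variable {G}

lemma isPlay_and_consEve_of_histMove {σ : List V → V} {x : ℕ → List V × V}
    (hx₀ : x 0 = ([], G.init)) (hx : ∀ i, G.HistMove σ (x i) (x (i + 1))) :
    G.IsPlay (Prod.snd ∘ x) ∧ G.ConsEve σ (Prod.snd ∘ x) := by
  have hpast (i : ℕ) : (x i).1 = List.ofFn fun j : Fin i => (x j).2 := by
    induction i with
    | zero => simp only [hx₀, List.ofFn_zero]
    | succ i ih => rw [(hx i).1, ih, List.ofFn_succ_last]; rfl
  exact ⟨⟨congrArg Prod.snd hx₀, fun i => (hx i).2.1⟩,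
    fun i hi => ((hx i).2.2 hi).trans (congrArg σ (hpast (i + 1)))⟩

lemma exists_minimal_past {β : Type*} [LinearOrder β] [WellFoundedLT β] (σ : List V → V)
    (m : List V × V → β) : ∃ past : V → List V, ∀ a, G.IsHist σ a →
      G.IsHist σ (past a.2, a.2) ∧ m (past a.2, a.2) ≤ m a := by
  have hmin (v : V) : ∃ l, ∀ l', G.IsHist σ (l', v) → G.IsHist σ (l, v) ∧ m (l, v) ≤ m (l', v) := by
    obtain hempty | hne := {l | G.IsHist σ (l, v)}.eq_empty_or_nonempty
    · exact ⟨[], fun l' hl' => absurd hl' (Set.eq_empty_iff_forall_notMem.1 hempty l')⟩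
    · let l := Function.argminOn (fun l => m (l, v)) {l | G.IsHist σ (l, v)} hne
      exact ⟨l, fun l' hl' => ⟨Function.argminOn_mem _ _ hne,
        Function.argminOn_le (fun l => m (l, v)) _ hl'⟩⟩
  choose past hpast using hmin
  exact ⟨past, fun a ha => hpast a.2 a.1 ha⟩

/-- At `v`, Eve plays as her winning strategy does after the history ending in `v` whose signature
is lexicographically least. -/
theorem EveWins.eveWinsPos {L : Type*} [LinearOrder L] [Finite L] {lev : V → L} {A : Set L}
    (h : G.EveWins fun π => ∃ p ∈ A, AttainsLiminf (lev ∘ π) p) :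
    G.EveWinsPos fun π => ∃ p ∈ A, AttainsLiminf (lev ∘ π) p := by
  obtain ⟨σ, hσ, hwin⟩ := h
  have hpaths (x : ℕ → List V × V)
      (hx : ∀ i, G.IsHist σ (x i) ∧ G.HistMove σ (x i) (x (i + 1))) :
      ∃ p ∈ A, AttainsLiminf ((lev ∘ Prod.snd) ∘ x) p := by
    obtain ⟨y, hy₀, hy, n, hyx⟩ := exists_path_extension (hx 0).1 fun i => (hx i).2
    obtain ⟨hplay, hcons⟩ := isPlay_and_consEve_of_histMove hy₀ hy
    refine (hwin _ hplay hcons).imp fun p hp => hp.imp_right fun hatt => ?_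
    rw [← attainsLiminf_shift_iff n] at hatt
    simpa only [Function.comp_def, hyx] using hatt
  obtain ⟨θ, hθ⟩ := exists_signature
    (r := fun a b => G.IsHist σ a ∧ G.HistMove σ a b) (lev := lev ∘ Prod.snd) hpaths
  obtain ⟨past, hpast⟩ := exists_minimal_past (G := G) σ fun a => toLex (θ a)
  refine ⟨fun v => σ (past v ++ [v]), fun v hv => hσ _ v hv, fun π hπ hcons => ?_⟩
  let next (i : ℕ) : List V × V := (past (π i) ++ [π i], π (i + 1))
  have hmove (i : ℕ) : G.HistMove σ (past (π i), π i) (next i) := ⟨rfl, hπ.2 i, hcons i⟩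
  have hhist (i : ℕ) : G.IsHist σ (past (π i), π i) := by
    induction i with
    | zero =>
      have hroot : G.IsHist σ ([], π 0) := hπ.1 ▸ Relation.ReflTransGen.refl
      exact (hpast _ hroot).1
    | succ i ih => exact (hpast (next i) (ih.tail (hmove i))).1
  have hsig (i : ℕ) := hθ _ _ ⟨hhist i, hmove i⟩
  obtain ⟨p, hp, hatt⟩ := exists_attainsLiminf_of_signature (c := fun i => lev (π (i + 1)))
    (fun i => (hpast (next i) ((hhist i).tail (hmove i))).2)
    (fun i => (hsig i).1) (fun i => (hsig i).2)
  exact ⟨p, hp, (attainsLiminf_shift_iff 1).1 hatt⟩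

/-- Clamping the levels to an interval whose interior contains `A` makes them finite in number. -/
theorem EveWins.eveWinsPos_of_finite {L : Type*} [LinearOrder L] [LocallyFiniteOrder L]
    [NoMinOrder L] [NoMaxOrder L] [Nonempty L] {lev : V → L} {A : Set L} (hA : A.Finite)
    (h : G.EveWins fun π => ∃ a ∈ A, AttainsLiminf (lev ∘ π) a) :
    G.EveWinsPos fun π => ∃ a ∈ A, AttainsLiminf (lev ∘ π) a := by
  obtain ⟨b, hb⟩ := hA.bddBelow
  obtain ⟨lo, hlo⟩ := exists_lt b
  obtain ⟨c, hc⟩ := hA.bddAbove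
  obtain ⟨hi, hhi⟩ := exists_gt (max lo c)
  have hle : lo ≤ hi := (le_max_left lo c).trans hhi.le
  have hAIoo : A ⊆ Set.Ioo lo hi := fun a ha =>
    ⟨hlo.trans_le (hb ha), (hc ha).trans_lt ((le_max_right lo c).trans_lt hhi)⟩
  simp only [← exists_attainsLiminf_projIcc_iff hle hAIoo] at h ⊢
  exact EveWins.eveWinsPos (lev := Set.projIcc lo hi hle ∘ lev) h

end GameGraph

/-! ### Finitely many reachable points -/

section Reachable

variable {α : Type*} {r : α → α → Prop} {a : α}

lemma finite_setOf_reflTransGen_of_acc (hr : ∀ x, {y | r x y}.Finite) (ha : Acc (flip r) a) :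
    {y | Relation.ReflTransGen r a y}.Finite := by
  induction ha with
  | intro x _ ih =>
    refine (((hr x).biUnion ih).insert x).subset fun y hy => ?_
    obtain rfl | ⟨z, hxz, hzy⟩ := hy.cases_head
    · exact Set.mem_insert _ _
    · exact Set.mem_insert_of_mem _ (Set.mem_biUnion hxz hzy)

/-- König's lemma between two visits to `s`. -/
lemma finite_setOf_reflTransGen {s : Set α} (hs : s.Finite) (hr : ∀ x, {y | r x y}.Finite)
    (hpath : ∀ x : ℕ → α, x 0 = a → (∀ i, r (x i) (x (i + 1))) → ∃ᶠ i in atTop, x i ∈ s) :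
    {y | Relation.ReflTransGen r a y}.Finite := by
  let avoid (x y : α) : Prop := r x y ∧ y ∉ s
  have havoid (x : α) (hx : Relation.ReflTransGen r a x) :
      {y | Relation.ReflTransGen avoid x y}.Finite := by
    refine finite_setOf_reflTransGen_of_acc (fun y => (hr y).subset fun _ h => h.1) ?_
    by_contra hacc
    obtain ⟨f, rfl, hf⟩ := not_acc_iff_exists_descending_chain.1 hacc
    obtain ⟨y, hy₀, hy, n, hyf⟩ := exists_path_extension hx fun i => (hf i).1
    obtain ⟨i, his, hi⟩ :=
      ((hpath y hy₀ hy).and_eventually (eventually_gt_atTop n)).exists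
    obtain ⟨k, rfl⟩ := Nat.exists_eq_add_of_lt hi
    refine (hf k).2 ?_
    rwa [← hyf, Nat.add_right_comm, Nat.add_comm k n]
  let bases : Set α := insert a s ∩ {x | Relation.ReflTransGen r a x}
  have hbases : bases.Finite := (hs.insert a).inter_of_left _
  refine (hbases.biUnion fun x hx => havoid x hx.2).subset fun y hy => ?_
  induction hy with
  | refl => exact Set.mem_biUnion ⟨Set.mem_insert a s, .refl⟩ Relation.ReflTransGen.refl
  | @tail y z hay hyz ih =>
    by_cases hz : z ∈ s
    · exact Set.mem_biUnion ⟨Set.mem_insert_of_mem a hz, hay.tail hyz⟩ Relation.ReflTransGen.refl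
    · obtain ⟨x, hx, hxy⟩ := Set.mem_iUnion₂.1 ih
      exact Set.mem_biUnion hx (Relation.ReflTransGen.tail hxy ⟨hyz, hz⟩)

end Reachable

/-! ### The product with the integers -/

namespace GameGraph

variable {V : Type} (G : GameGraph V)

/-- The product of `G` with the integers: the second component of a position is the total weight
of the play so far. -/
def counterGame : GameGraph (V × ℤ) where
  Eve := {x | x.1 ∈ G.Eve}
  E x y := G.E x.1 y.1 ∧ y.2 = x.2 + G.w x.1 y.1
  w x y := G.w x.1 y.1
  init := (G.init, 0)
  succ x := (G.succ x.1).imp' (fun u => (u, x.2 + G.w x.1 u)) fun _ hu => ⟨hu, rfl⟩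

/-- The play of `G.counterGame` that projects to the play `π` of `G`. -/
def counterPlay (π : ℕ → V) (i : ℕ) : V × ℤ :=
  (π i, G.partialSum π i)

variable {G}

lemma counterPlay_zero (π : ℕ → V) : G.counterPlay π 0 = (π 0, 0) :=
  Prod.ext rfl (Finset.sum_range_zero fun i => G.w (π i) (π (i + 1)))

lemma counterPlay_succ (π : ℕ → V) (i : ℕ) :
    G.counterPlay π (i + 1) = (π (i + 1), (G.counterPlay π i).2 + G.w (π i) (π (i + 1))) :=
  Prod.ext rfl (Finset.sum_range_succ _ i)

lemma IsPlay.counterPlay {π : ℕ → V} (hπ : G.IsPlay π) :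
    G.counterGame.IsPlay (G.counterPlay π) :=
  ⟨(counterPlay_zero π).trans (congrArg (·, 0) hπ.1),
    fun i => ⟨hπ.2 i, congrArg Prod.snd (counterPlay_succ π i)⟩⟩

lemma IsPlay.of_counterGame {ξ : ℕ → V × ℤ} (hξ : G.counterGame.IsPlay ξ) :
    G.IsPlay (Prod.fst ∘ ξ) ∧ ξ = G.counterPlay (Prod.fst ∘ ξ) := by
  refine ⟨⟨congrArg Prod.fst hξ.1, fun i => (hξ.2 i).1⟩, funext fun i => ?_⟩
  induction i with
  | zero => rw [counterPlay_zero, Function.comp_apply, hξ.1]; rfl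
  | succ i ih =>
    rw [counterPlay_succ, ← ih]
    exact Prod.ext rfl (hξ.2 i).2

lemma map_prefixList {W : Type} (g : V → W) (π : ℕ → V) (i : ℕ) :
    (prefixList π i).map g = prefixList (g ∘ π) i :=
  List.map_ofFn ..

theorem EveWins.counterGame {Win : (ℕ → V × ℤ) → Prop}
    (h : G.EveWins fun π => Win (G.counterPlay π)) : G.counterGame.EveWins Win := by
  obtain ⟨σ, hσ, hwin⟩ := h
  let step (l : List (V × ℤ)) (x : V × ℤ) : V × ℤ :=
    (σ (l.map Prod.fst), x.2 + G.w x.1 (σ (l.map Prod.fst)))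
  refine ⟨fun l => step l (l.getLast?.getD G.counterGame.init), fun l x hx => ?_,
    fun ξ hξ hcons => ?_⟩
  · simp only [step, List.getLast?_concat, Option.getD_some, List.map_append, List.map_cons,
      List.map_nil]
    exact ⟨hσ _ _ hx, rfl⟩
  · obtain ⟨hplay, heq⟩ := hξ.of_counterGame
    rw [heq]
    refine hwin _ hplay fun i hi => ?_
    have hmove := congrArg Prod.fst (hcons i hi)
    rwa [show (step _ _).1 = σ _ from rfl, map_prefixList] at hmove

/-- One move of a game in which Eve follows the positional strategy `f`. -/
def PosMove (G : GameGraph V) (f : V → V) (x y : V) : Prop :=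
  G.E x y ∧ (x ∈ G.Eve → y = f x)

lemma isPlay_and_consEvePos_iff {f : V → V} {π : ℕ → V} :
    G.IsPlay π ∧ G.ConsEvePos f π ↔ π 0 = G.init ∧ ∀ i, G.PosMove f (π i) (π (i + 1)) :=
  ⟨fun ⟨h, hf⟩ => ⟨h.1, fun i => ⟨h.2 i, hf i⟩⟩,
    fun ⟨h₀, h⟩ => ⟨⟨h₀, fun i => (h i).1⟩, fun i => (h i).2⟩⟩

lemma finite_setOf_reflTransGen_posMove_counterGame [Finite V] {A : Set ℤ} (hA : A.Finite)
    {f : V × ℤ → V × ℤ}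
    (hfreq : ∀ ξ, G.counterGame.IsPlay ξ → G.counterGame.ConsEvePos f ξ →
      ∃ᶠ i in atTop, (ξ i).2 ∈ A) :
    {y | Relation.ReflTransGen (G.counterGame.PosMove f) G.counterGame.init y}.Finite := by
  refine finite_setOf_reflTransGen (s := Set.univ ×ˢ A) (Set.finite_univ.prod hA) (fun x => ?_)
    fun ξ hξ₀ hξ => ?_
  · refine (Set.finite_range fun u => (u, x.2 + G.w x.1 u)).subset fun y hy => ?_
    exact ⟨y.1, Prod.ext rfl hy.1.2.symm⟩
  · obtain ⟨hplay, hcons⟩ := isPlay_and_consEvePos_iff.2 ⟨hξ₀, hξ⟩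
    exact (hfreq ξ hplay hcons).mono fun i hi => ⟨Set.mem_univ _, hi⟩

lemma eq_of_counterGame_E {x y z : V × ℤ} (hy : G.counterGame.E x y) (hz : G.counterGame.E x z)
    (h : y.1 = z.1) : y = z :=
  Prod.ext h (by rw [hy.2, hz.2, h])

/-- The position of `G.counterGame` reached when `G` moves to `v`, computed from the previous
position; `none` stands for the absence of a previous position. -/
def nextPos (G : GameGraph V) : Option (V × ℤ) → V → V × ℤ
  | none, v => (v, 0)
  | some x, v => (v, x.2 + G.w x.1 v)

lemma nextPos_fst (m : Option (V × ℤ)) (v : V) : (G.nextPos m v).1 = v := by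
  cases m <;> rfl

theorem eveWinsFM_of_counterGame {Win : (ℕ → V × ℤ) → Prop} {f : V × ℤ → V × ℤ}
    (hf : ∀ x ∈ G.counterGame.Eve, G.counterGame.E x (f x))
    (hfin : {y | Relation.ReflTransGen (G.counterGame.PosMove f) G.counterGame.init y}.Finite)
    (hwin : ∀ ξ, G.counterGame.IsPlay ξ → G.counterGame.ConsEvePos f ξ → Win ξ) :
    G.EveWinsFM fun π => Win (G.counterPlay π) := by
  classical
  let F := {y | Relation.ReflTransGen (G.counterGame.PosMove f) G.counterGame.init y}
  have : Finite F := hfin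
  let next (m : Option F) (v : V) : V × ℤ := G.nextPos (m.map Subtype.val) v
  let δ (m : Option F) (v : V) : Option F :=
    if h : next m v ∈ F then some ⟨next m v, h⟩ else none
  refine ⟨Option F, Fintype.ofFinite _, none, δ, fun m v => (f (next m v)).1, fun m v hv => ?_,
    fun π hπ hcons => ?_⟩
  · have hfst : (next m v).1 = v := nextPos_fst _ v
    have hmove := (hf (next m v) (hfst.symm ▸ hv : (next m v).1 ∈ G.Eve)).1
    rwa [hfst] at hmove
  · have hplay := hπ.counterPlay
    have hmove (i : ℕ) (hi : next (memRun δ none π i) (π i) = G.counterPlay π i)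
        (hEve : π i ∈ G.Eve) : G.counterPlay π (i + 1) = f (G.counterPlay π i) :=
      eq_of_counterGame_E (hplay.2 i) (hf _ hEve) (hi ▸ hcons i hEve)
    have hrun (i : ℕ) : next (memRun δ none π i) (π i) = G.counterPlay π i ∧
        G.counterPlay π i ∈ F := by
      induction i with
      | zero =>
        exact ⟨(counterPlay_zero π).symm, hplay.1 ▸ Relation.ReflTransGen.refl⟩
      | succ i ih =>
        obtain ⟨hnext, hmem⟩ := ih
        have hmemory : memRun δ none π (i + 1) = some ⟨G.counterPlay π i, hmem⟩ := by
          simp only [memRun, δ, hnext, hmem, dite_true]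
        rw [hmemory]
        exact ⟨(counterPlay_succ π i).symm,
          Relation.ReflTransGen.tail hmem ⟨hplay.2 i, hmove i hnext⟩⟩
    exact hwin _ hplay fun i hi => hmove i (hrun i).1 hi

end GameGraph

theorem stmt18_general {V : Type} [Finite V] (G : GameGraph V) (I : Set ℝ)
    (hfin : (I ∩ Set.range ((↑) : ℤ → ℝ)).Finite) :
    G.EveWins (fun π => ∃ x : ℝ, x ∈ I ∧ G.totalPayoff π = (x : EReal)) →
      G.EveWinsFM (fun π => ∃ x : ℝ, x ∈ I ∧ G.totalPayoff π = (x : EReal)) := by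
  have hA : ((↑) ⁻¹' I : Set ℤ).Finite :=
    .of_finite_image (f := ((↑) : ℤ → ℝ)) (by rwa [Set.image_preimage_eq_inter_range])
      Int.cast_injective.injOn
  simp only [GameGraph.totalPayoff, exists_liminf_intCast_eq_iff]
  intro hwin
  obtain ⟨f, hf, hfwin⟩ := (GameGraph.EveWins.counterGame
    (Win := fun ξ => ∃ a ∈ ((↑) ⁻¹' I : Set ℤ), AttainsLiminf (Prod.snd ∘ ξ) a)
    hwin).eveWinsPos_of_finite hA
  have hreach := GameGraph.finite_setOf_reflTransGen_posMove_counterGame hA fun ξ hξ hcons =>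
    let ⟨_, ha, hatt⟩ := hfwin ξ hξ hcons
    hatt.1.mono fun _ hi => Set.mem_of_eq_of_mem hi ha
  exact GameGraph.eveWinsFM_of_counterGame hf hreach hfwin

/-- Let `(G, I)` be an interval total-sum game where `I` is a
finite union of real intervals such that `I ∩ ℤ` is finite. If Eve has a winning
strategy (ensuring that `Total(π)` is (finite and) in `I` for every consistent play),
then she has a finite-memory winning strategy. -/
theorem stmt18 {V : Type} [Fintype V] (G : GameGraph V) (r : ℕ)
    (Is : Fin r → Set ℝ) (hconn : ∀ i, (Is i).OrdConnected)
    (I : Set ℝ) (hI : I = ⋃ i, Is i)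
    (hfin : (I ∩ Set.range ((↑) : ℤ → ℝ)).Finite) :
    G.EveWins (fun π => ∃ x : ℝ, x ∈ I ∧ G.totalPayoff π = (x : EReal)) →
      G.EveWinsFM (fun π => ∃ x : ℝ, x ∈ I ∧ G.totalPayoff π = (x : EReal)) :=
  stmt18_general G I hfin
end

section
/- Let (G, I) be a single-interval total-sum game, where I ⊆ ℝ is a (possibly unbounded) interval. If Eve has a winning strategy (a strategy such that every consistent play π satisfies Total(π) ∈ I) then she has a finite-memory winning strategy, i.e., a winning strategy computed by a finite-state machine. -/
/-!
A configuration is a vertex together with the sum of the weights so far. Suppose that Eve wins from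
some configuration, but not with finite memory. The lower bound on the inferior limit is a countable
union over `a` of the conditions "the sum is eventually at least `a`", so a Baire category argument
yields an `a` and a winning strategy along which the sum never drops below `a` until a configuration
is reached from which finite memory suffices. It remains to bound the sum from above as well, since
a strategy on finitely many configurations has finite memory.

If the interval has a largest integer `b`, then every play has to return to sums at most `b`, and
since the game is finitely branching the waiting time is bounded by a rank of the configuration.
With `W` the largest absolute weight, Eve can keep `sum + W * rank` bounded.

If the interval is unbounded above, then configurations only get better as the sum increases. Were
there vertices from which Adam can force arbitrarily large climbs, he could climb from one to
another forever and drive the sum to infinity. So climbs are bounded, and once the sum is high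
Eve can keep it below a fixed value.
-/

open Filter

/-! ## Sequences and infinite paths -/

section Sequences

theorem frequently_of_forall_or_lt {α : Type*} [Preorder α] [WellFoundedLT α] {p : ℕ → Prop}
    {ρ : ℕ → α} (h : ∀ i, p i ∨ ρ (i + 1) < ρ i) : ∃ᶠ i in atTop, p i := by
  by_contra hp
  obtain ⟨N, hN⟩ := eventually_atTop.1 (not_frequently.1 hp)
  exact not_strictAnti_of_wellFoundedLT (fun k => ρ (N + k)) <| strictAnti_nat_of_succ_lt fun k =>
    (h (N + k)).resolve_left (hN _ (Nat.le_add_right N k))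

theorem tendsto_atTop_of_lex {α : Type*} [Preorder α] [WellFoundedLT α] {ψ : ℕ → ℤ} {ρ : ℕ → α}
    (h : ∀ i, ψ i < ψ (i + 1) ∨ ψ (i + 1) = ψ i ∧ ρ (i + 1) < ρ i) : Tendsto ψ atTop atTop := by
  have hmono : Monotone ψ := monotone_nat_of_le_succ fun i => (h i).elim le_of_lt fun h => h.1.ge
  have hjump : ∃ᶠ i in atTop, ψ i < ψ (i + 1) :=
    frequently_of_forall_or_lt fun i => (h i).imp_right And.right
  have hunbounded (c : ℕ) : ∃ i, ψ 0 + c ≤ ψ i := by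
    induction c with
    | zero => exact ⟨0, by simp⟩
    | succ c ih =>
      obtain ⟨i, hi⟩ := ih
      obtain ⟨j, hij, hj⟩ := frequently_atTop.1 hjump i
      exact ⟨j + 1, by have := hmono hij; push_cast; lia⟩
  refine tendsto_atTop_atTop_of_monotone hmono fun b => ?_
  obtain ⟨i, hi⟩ := hunbounded (b - ψ 0).toNat
  exact ⟨i, by lia⟩

variable {X : Type*} {r : X → X → Prop}

theorem exists_chain (hr : ∀ x, ∃ y, r x y) (x : X) :
    ∃ s : ℕ → X, s 0 = x ∧ ∀ i, r (s i) (s (i + 1)) := by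
  choose f hf using hr
  exact ⟨fun i => f^[i] x, rfl, fun i => by
    simpa only [Function.iterate_succ_apply'] using hf (f^[i] x)⟩

theorem exists_chain_of_reflTransGen {x : X} {s : ℕ → X} (h : Relation.ReflTransGen r x (s 0))
    (hs : ∀ i, r (s i) (s (i + 1))) :
    ∃ (s' : ℕ → X) (m : ℕ), s' 0 = x ∧ (∀ i, r (s' i) (s' (i + 1))) ∧ ∀ k, s' (k + m) = s k := by
  induction h using Relation.ReflTransGen.head_induction_on with
  | refl => exact ⟨s, 0, rfl, hs, fun _ => rfl⟩
  | @head x y hxy _ ih =>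
    obtain ⟨s', m, hs0, hs', htail⟩ := ih
    refine ⟨fun | 0 => x | i + 1 => s' i, m + 1, rfl, ?_, htail⟩
    rintro (_ | i)
    · simpa only [hs0] using hxy
    · exact hs' i

theorem exists_rank_of_reachable {Q : X → Prop}
    (h : ∀ x, ∃ y, Relation.ReflTransGen r x y ∧ Q y) :
    ∃ ρ : X → ℕ, ∀ x, Q x ∨ ∃ y, r x y ∧ ρ y < ρ x := by
  let D : ℕ → X → Prop := fun n => n.rec Q fun _ D x => ∃ y, r x y ∧ D y
  have hD (x : X) : ∃ n, D n x := by
    obtain ⟨y, hxy, hy⟩ := h x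
    induction hxy using Relation.ReflTransGen.head_induction_on with
    | refl => exact ⟨0, hy⟩
    | head hxz _ ih => exact ih.imp' Nat.succ fun n hn => ⟨_, hxz, hn⟩
  refine ⟨fun x => sInf {n | D n x}, fun x => ?_⟩
  have hx : D (sInf {n | D n x}) x := Nat.sInf_mem (hD x)
  rcases hn : sInf {n | D n x} with _ | n <;> rw [hn] at hx
  · exact .inl hx
  · obtain ⟨y, hxy, hy⟩ := hx
    exact .inr ⟨y, hxy, (Nat.lt_succ_of_le (Nat.sInf_le hy)).trans_eq hn.symm⟩

theorem exists_nat_map_frequently_eq (ι : Type*) [Countable ι] [Nonempty ι] :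
    ∃ e : ℕ → ι, ∀ n, ∃ᶠ j in atTop, e j = n := by
  obtain ⟨f, hf⟩ := exists_surjective_nat ι
  refine ⟨fun j => f j.unpair.1, fun n => frequently_atTop.2 fun N => ?_⟩
  obtain ⟨k, rfl⟩ := hf n
  exact ⟨Nat.pair k N, Nat.right_le_pair k N, by simp only [Nat.unpair_pair]⟩

theorem exists_chain_frequently_of_reachable {ι : Type*} [Countable ι] [Nonempty ι]
    {Q : ι → X → Prop} (h : ∀ n x, ∃ y, Relation.ReflTransGen r x y ∧ Q n y)
    (hr : ∀ x, ∃ y, r x y) (x₀ : X) :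
    ∃ s : ℕ → X, (∀ i, r (s i) (s (i + 1))) ∧ ∀ n, ∃ᶠ i in atTop, Q n (s i) := by
  choose ρ hρ using fun n => exists_rank_of_reachable (h n)
  obtain ⟨e, he⟩ := exists_nat_map_frequently_eq ι
  -- In phase `j` the chain walks towards `Q (e j)`; once there it moves on to phase `j + 1`.
  let R : X × ℕ → X × ℕ → Prop := fun a b =>
    r a.1 b.1 ∧ (Q (e a.2) a.1 ∧ b.2 = a.2 + 1 ∨ ρ (e a.2) b.1 < ρ (e a.2) a.1 ∧ b.2 = a.2)
  have hR (a : X × ℕ) : ∃ b, R a b := by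
    rcases hρ (e a.2) a.1 with hQ | ⟨y, hy, hlt⟩
    · obtain ⟨y, hy⟩ := hr a.1
      exact ⟨(y, a.2 + 1), hy, .inl ⟨hQ, rfl⟩⟩
    · exact ⟨(y, a.2), hy, .inr ⟨hlt, rfl⟩⟩
  obtain ⟨s, hs0, hs⟩ := exists_chain hR (x₀, 0)
  have hexit (m i : ℕ) (hm : ρ (e (s i).2) (s i).1 = m) :
      ∃ k ≥ i, (s k).2 = (s i).2 ∧ Q (e (s k).2) (s k).1 ∧ (s (k + 1)).2 = (s k).2 + 1 := by
    induction m using Nat.strong_induction_on generalizing i with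
    | _ m ih =>
      rcases (hs i).2 with ⟨hQ, hphase⟩ | ⟨hlt, hphase⟩
      · exact ⟨i, le_rfl, rfl, hQ, hphase⟩
      · obtain ⟨k, hk, hki, hQ⟩ := ih _ (hm ▸ hphase ▸ hlt) (i + 1) rfl
        exact ⟨k, (Nat.le_succ i).trans hk, hki.trans hphase, hQ⟩
  have hphase (j : ℕ) : ∃ i ≥ j, (s i).2 = j := by
    induction j with
    | zero => exact ⟨0, le_rfl, by rw [hs0]⟩
    | succ j ih =>
      obtain ⟨i, hij, hi⟩ := ih
      obtain ⟨k, hk, hki, -, hk'⟩ := hexit _ i rfl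
      exact ⟨k + 1, by lia, by rw [hk', hki, hi]⟩
  refine ⟨fun i => (s i).1, fun i => (hs i).1, fun n => frequently_atTop.2 fun N => ?_⟩
  obtain ⟨j, hNj, rfl⟩ := frequently_atTop.1 (he n) N
  obtain ⟨i, hij, hi⟩ := hphase j
  obtain ⟨k, hk, hki, hQ, -⟩ := hexit _ i rfl
  exact ⟨k, by lia, by rwa [hki, hi] at hQ⟩

-- The Baire category argument: otherwise every `P n` can be left from everywhere, and a chain
-- leaving each of them infinitely often contradicts `h`.
theorem exists_forall_reachable_of_eventually {ι : Type*} [Countable ι] [Nonempty X]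
    {P : ι → X → Prop} (hr : ∀ x, ∃ y, r x y)
    (h : ∀ s : ℕ → X, (∀ i, r (s i) (s (i + 1))) → ∃ n, ∀ᶠ i in atTop, P n (s i)) :
    ∃ n x, ∀ y, Relation.ReflTransGen r x y → P n y := by
  obtain ⟨x₀⟩ := ‹Nonempty X›
  have hι : Nonempty ι := by
    obtain ⟨s, -, hs⟩ := exists_chain hr x₀
    exact (h s hs).nonempty
  by_contra! hP
  obtain ⟨s, hs, hQ⟩ := exists_chain_frequently_of_reachable hP hr x₀
  obtain ⟨n, hn⟩ := h s hs
  exact hQ n (hn.mono fun _ => not_not.2)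

end Sequences

/-! ## Two-player arenas -/

/-- A turn-based game on the positions `α`, seen by the player who moves at the positions in `own`;
the opponent moves at all others. -/
structure Arena (α : Type) where
  step : α → α → Prop
  own : Set α
  exists_step : ∀ x, ∃ y, step x y

namespace Arena

variable {α : Type} {A : Arena α} {S S' T C P : Set α} {x : α}

/-- The arena with the two players exchanged. -/
def swap (A : Arena α) : Arena α where
  __ := A
  own := A.ownᶜ

@[simp]
theorem swap_swap (A : Arena α) : A.swap.swap = A := by
  simp only [swap, compl_compl]

/-- The controllable predecessor: the player can ensure that the next position after `x` is
in `S`. -/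
def Forces (A : Arena α) (x : α) (S : Set α) : Prop :=
  (x ∈ A.own → ∃ y ∈ S, A.step x y) ∧ (x ∉ A.own → ∀ y, A.step x y → y ∈ S)

theorem Forces.mono (h : A.Forces x S) (hS : ∀ y, A.step x y → y ∈ S → y ∈ S') :
    A.Forces x S' :=
  ⟨fun hx => (h.1 hx).imp fun y hy => ⟨hS y hy.2 hy.1, hy.2⟩,
    fun hx y hy => hS y hy (h.2 hx y hy)⟩

theorem Forces.exists_step (h : A.Forces x S) : ∃ y ∈ S, A.step x y := by
  by_cases hx : x ∈ A.own
  · exact h.1 hx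
  · exact (A.exists_step x).imp fun y hy => ⟨h.2 hx y hy, hy⟩

theorem Forces.exists_step_inter (h : A.Forces x S) (h' : A.swap.Forces x S') :
    ∃ y ∈ S ∩ S', A.step x y := by
  by_cases hx : x ∈ A.own
  · obtain ⟨y, hyS, hy⟩ := h.1 hx
    exact ⟨y, ⟨hyS, h'.2 (not_not.2 hx) y hy⟩, hy⟩
  · obtain ⟨y, hyS', hy⟩ := h'.1 hx
    exact ⟨y, ⟨h.2 hx y hy, hyS'⟩, hy⟩

theorem not_forces_iff : ¬ A.Forces x S ↔ A.swap.Forces x Sᶜ := by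
  by_cases hx : x ∈ A.own <;> simp [Forces, swap, hx, imp_not_comm, and_comm]

/-- Every position has finitely many successors. -/
def FinitelyBranching (A : Arena α) : Prop :=
  ∀ x, {y | A.step x y}.Finite

theorem Forces.exists_of_iUnion (hA : A.FinitelyBranching) {S : ℕ → Set α} (hS : Monotone S)
    (h : A.Forces x (⋃ n, S n)) : ∃ n, A.Forces x (S n) := by
  by_cases hx : x ∈ A.own
  · obtain ⟨y, hy, hstep⟩ := h.1 hx
    obtain ⟨n, hn⟩ := Set.mem_iUnion.1 hy
    exact ⟨n, fun _ => ⟨y, hn, hstep⟩, fun hx' => absurd hx hx'⟩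
  · have hall : ∀ᶠ n in atTop, ∀ y ∈ {y | A.step x y}, y ∈ S n :=
      (eventually_all_finite (hA x)).2 fun y hy => by
        obtain ⟨n, hn⟩ := Set.mem_iUnion.1 (h.2 hx y hy)
        exact eventually_atTop.2 ⟨n, fun m hm => hS hm hn⟩
    exact hall.exists.imp fun n hn => ⟨fun hx' => absurd hx' hx, fun _ => hn⟩

/-! ### Attractors -/

/-- The positions from which the player can, moving from positions of `P` only, reach `P ∩ C` in
fewer than `n` moves or exit into `T` within `n` moves. -/
def attractor (A : Arena α) (P C T : Set α) : ℕ → Set α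
  | 0 => ∅
  | n + 1 => {x ∈ P | x ∈ C ∨ A.Forces x (T ∪ A.attractor P C T n)}

theorem attractor_mono (A : Arena α) (P C T : Set α) : Monotone (A.attractor P C T) := by
  refine monotone_nat_of_le_succ fun n => ?_
  induction n with
  | zero => exact Set.empty_subset _
  | succ n ih =>
    exact fun x hx => ⟨hx.1, hx.2.imp_right fun h =>
      h.mono fun y _ hy => Set.union_subset_union_right T ih hy⟩

theorem attractor_subset {n : ℕ} : A.attractor P C T n ⊆ P := by
  cases n with
  | zero => exact Set.empty_subset P
  | succ n => exact fun x hx => hx.1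

theorem notMem_and_forces_of_notMem_attractor (hA : A.FinitelyBranching) (hP : x ∈ P)
    (hx : x ∉ ⋃ n, A.attractor P C T n) :
    x ∉ C ∧ A.swap.Forces x (T ∪ ⋃ n, A.attractor P C T n)ᶜ := by
  simp only [Set.mem_iUnion, not_exists] at hx
  refine ⟨fun hC => hx 1 ⟨hP, .inl hC⟩, not_forces_iff.1 fun h => ?_⟩
  rw [Set.union_iUnion] at h
  obtain ⟨n, hn⟩ := h.exists_of_iUnion hA fun m n hmn =>
    Set.union_subset_union_right T (A.attractor_mono P C T hmn)
  exact hx (n + 1) ⟨hP, .inr hn⟩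

theorem exists_rank_attractor (A : Arena α) (P C T : Set α) :
    ∃ ρ : α → ℕ, ∀ x ∈ ⋃ n, A.attractor P C T n,
      x ∈ C ∨ A.Forces x (T ∪ {y ∈ P | ρ y < ρ x}) := by
  refine ⟨fun x => sInf {n | x ∈ A.attractor P C T n}, fun x hx => ?_⟩
  have hx : x ∈ A.attractor P C T (sInf {n | x ∈ A.attractor P C T n}) :=
    Nat.sInf_mem (Set.mem_iUnion.1 hx)
  rcases hn : sInf {n | x ∈ A.attractor P C T n} with _ | n <;> rw [hn] at hx
  · exact hx.elim
  · refine hx.2.imp_right fun h => h.mono fun y _ hy => hy.imp_right fun hy => ?_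
    exact ⟨attractor_subset hy, (Nat.lt_succ_of_le (Nat.sInf_le hy)).trans_eq hn.symm⟩

/-! ### Systems -/

/-- A strategy of the player with memory: every state `x` carries a position `pos x`, and the player
can ensure that the game moves on to the position of a successor state, or exits into `T`. The
successor states include all those needed to answer the opponent. -/
structure System (A : Arena α) (T : Set α) where
  State : Type
  pos : State → α
  next : State → State → Prop
  step_of_next : ∀ {x y}, next x y → A.step (pos x) (pos y)
  forces : ∀ x, A.Forces (pos x) (T ∪ pos '' {y | next x y})

namespace System

variable {W : Set (ℕ → α)}

/-- An infinite run through the states of a system. -/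
def IsRun (S : A.System T) (s : ℕ → S.State) : Prop :=
  ∀ i, S.next (s i) (s (i + 1))

/-- All plays that stay in the system forever satisfy the objective `W`. -/
def Wins (S : A.System T) (W : Set (ℕ → α)) : Prop :=
  ∀ s, S.IsRun s → S.pos ∘ s ∈ W

/-- The subsystem on the states satisfying `p`, in which leaving `p` counts as an exit. -/
def restrict (S : A.System T) {T' : Set α} (p : S.State → Prop) (hT : T ⊆ T')
    (hp : ∀ x y, p x → S.next x y → p y ∨ S.pos y ∈ T') : A.System T' where
  State := Subtype p
  pos x := S.pos x
  next x y := S.next x y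
  step_of_next h := S.step_of_next h
  forces x := (S.forces x).mono <| by
    rintro _ - (hy | ⟨y, hy, rfl⟩)
    · exact .inl (hT hy)
    · exact (hp x y x.2 hy).elim (fun h => .inr ⟨⟨y, h⟩, hy, rfl⟩) .inl

theorem Wins.restrict {S : A.System T} (h : S.Wins W) {T' : Set α} {p : S.State → Prop}
    (hT : T ⊆ T') (hp : ∀ x y, p x → S.next x y → p y ∨ S.pos y ∈ T') :
    (S.restrict p hT hp).Wins W :=
  fun s hs => h (fun i => (s i).1) hs

/-- The transition relation of `System.append`. -/
inductive AppendNext (S : A.System T) (R : A.System ∅) :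
    S.State ⊕ R.State → S.State ⊕ R.State → Prop
  | left {x y} : S.next x y → AppendNext S R (.inl x) (.inl y)
  | exit {x z} : A.step (S.pos x) (R.pos z) → AppendNext S R (.inl x) (.inr z)
  | right {z z'} : R.next z z' → AppendNext S R (.inr z) (.inr z')

/-- Follow `S` until the game exits into `T`, then switch to `R`. -/
def append (S : A.System T) (R : A.System ∅) (hT : T ⊆ Set.range R.pos) : A.System ∅ where
  State := S.State ⊕ R.State
  pos := Sum.elim S.pos R.pos
  next := AppendNext S R
  step_of_next
    | .left h => S.step_of_next h
    | .exit h => h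
    | .right h => R.step_of_next h
  forces
    | .inl x => (S.forces x).mono fun y hstep hy => .inr <| by
        rcases hy with hy | ⟨y, hy, rfl⟩
        · obtain ⟨z, rfl⟩ := hT hy
          exact ⟨.inr z, .exit hstep, rfl⟩
        · exact ⟨.inl y, .left hy, rfl⟩
    | .inr z => (R.forces z).mono fun y _ hy => hy.imp_right <| by
        rintro ⟨z', hz', rfl⟩
        exact ⟨.inr z', .right hz', rfl⟩

theorem IsRun.append_cases {S : A.System T} {R : A.System ∅} {hT : T ⊆ Set.range R.pos}
    {s : ℕ → S.State ⊕ R.State} (hs : (S.append R hT).IsRun s) :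
    (∃ x, S.IsRun x ∧ ∀ k, s k = .inl (x k)) ∨
      ∃ m z, R.IsRun z ∧ ∀ k, s (k + m) = .inr (z k) := by
  have hs (k : ℕ) : AppendNext S R (s k) (s (k + 1)) := hs k
  by_cases hleft : ∀ k, ∃ x, s k = .inl x
  · choose x hx using hleft
    refine .inl ⟨x, fun k => ?_, hx⟩
    have hk := hs k
    rw [hx, hx] at hk
    cases hk with
    | left h => exact h
  · push Not at hleft
    obtain ⟨m, hm⟩ := hleft
    have hright (k : ℕ) : ∃ z, s (k + m) = .inr z := by
      induction k with
      | zero =>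
        rw [Nat.zero_add]
        exact (Sum.exists.1 ⟨s m, rfl⟩).resolve_left fun ⟨x, hx⟩ => hm x hx
      | succ k ih =>
        obtain ⟨z, hz⟩ := ih
        have hk := hs (k + m)
        rw [Nat.add_right_comm, hz] at hk
        generalize s (k + 1 + m) = t at hk
        cases hk with
        | right => exact ⟨_, rfl⟩
    choose z hz using hright
    refine .inr ⟨m, z, fun k => ?_, hz⟩
    have hk := hs (k + m)
    rw [Nat.add_right_comm, hz, hz] at hk
    cases hk with
    | right h => exact h

end System

/-- Objectives that do not depend on any finite prefix. -/
def PrefixIndependent (W : Set (ℕ → α)) : Prop :=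
  ∀ s m, (fun k => s (k + m)) ∈ W ↔ s ∈ W

/-- The positions from which the player has a winning strategy for `W`. -/
def winRegion (A : Arena α) (W : Set (ℕ → α)) : Set α :=
  {q | ∃ S : A.System ∅, S.Wins W ∧ q ∈ Set.range S.pos}

/-- The positions from which the player has a finite-memory winning strategy for `W`. -/
def finWinRegion (A : Arena α) (W : Set (ℕ → α)) : Set α :=
  {q | ∃ S : A.System ∅, Finite S.State ∧ S.Wins W ∧ q ∈ Set.range S.pos}

section Objective

variable {W : Set (ℕ → α)}

theorem System.Wins.append (hW : PrefixIndependent W) {S : A.System T} {R : A.System ∅}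
    (hS : S.Wins W) (hR : R.Wins W) (hT : T ⊆ Set.range R.pos) : (S.append R hT).Wins W := by
  intro s hs
  rcases hs.append_cases with ⟨x, hx, hsx⟩ | ⟨m, z, hz, hsz⟩
  · convert hS x hx using 1
    exact funext fun k => congrArg (Sum.elim S.pos R.pos) (hsx k)
  · rw [← hW _ m]
    convert hR z hz using 1
    exact funext fun k => congrArg (Sum.elim S.pos R.pos) (hsz k)

theorem mem_winRegion_of_root (hW : PrefixIndependent W) (S : A.System ∅) (x : S.State)
    (hx : ∀ s, S.IsRun s → s 0 = x → S.pos ∘ s ∈ W) : S.pos x ∈ A.winRegion W := by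
  let S' : A.System ∅ := S.restrict (Relation.ReflTransGen S.next x) subset_rfl
    fun y z hy hz => .inl (hy.tail hz)
  refine ⟨S', fun s hs => ?_, ⟨x, .refl⟩, rfl⟩
  obtain ⟨s', m, hs0, hs', htail⟩ :=
    exists_chain_of_reflTransGen (s := fun i => (s i).1) (s 0).2 hs
  have hwin : (fun k => S.pos (s' (k + m))) ∈ W := (hW _ m).2 (hx s' hs' hs0)
  simp only [htail] at hwin
  exact hwin

theorem exists_system_of_finite (hW : PrefixIndependent W) {M : Set α} (hM : M.Finite)
    (h : M ⊆ A.finWinRegion W) :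
    ∃ S : A.System ∅, Finite S.State ∧ S.Wins W ∧ M ⊆ Set.range S.pos := by
  induction M, hM using Set.Finite.induction_on with
  | empty =>
    exact ⟨⟨Empty, Empty.elim, fun _ _ => False, False.elim, fun x => x.elim⟩,
      inferInstanceAs (Finite Empty), fun s => (s 0).elim, Set.empty_subset _⟩
  | @insert q M _ _ ih =>
    obtain ⟨S, hfin, hS, hq⟩ := h (Set.mem_insert q M)
    obtain ⟨R, hRfin, hR, hMR⟩ := ih ((Set.subset_insert q M).trans h)
    refine ⟨S.append R (Set.empty_subset _), inferInstanceAs (Finite (S.State ⊕ R.State)),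
      hS.append hW hR _, ?_⟩
    change _ ⊆ Set.range (Sum.elim S.pos R.pos)
    rw [Set.Sum.elim_range]
    exact Set.insert_subset (.inl hq) fun q' hq' => .inr (hMR hq')

theorem System.pos_mem_finWinRegion (hA : A.FinitelyBranching) (hW : PrefixIndependent W)
    (S : A.System (A.finWinRegion W)) [Finite S.State] (hS : S.Wins W) (x : S.State) :
    S.pos x ∈ A.finWinRegion W := by
  let M := A.finWinRegion W ∩ ⋃ y : S.State, {q | A.step (S.pos y) q}
  have hM : M.Finite := (Set.finite_iUnion fun y => hA (S.pos y)).inter_of_right _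
  obtain ⟨R, hRfin, hR, hMR⟩ := exists_system_of_finite hW hM Set.inter_subset_left
  let S' : A.System M :=
    { S with
      forces y := (S.forces y).mono fun q hstep hq => hq.imp_left fun hq =>
        ⟨hq, Set.mem_iUnion.2 ⟨y, hstep⟩⟩ }
  have hS' : S'.Wins W := hS
  exact ⟨S'.append R hMR, inferInstanceAs (Finite (S.State ⊕ R.State)), hS'.append hW hR hMR,
    .inl x, rfl⟩

theorem mem_finWinRegion_of_forces (hA : A.FinitelyBranching) (hW : PrefixIndependent W)
    (h : A.Forces x (A.finWinRegion W)) : x ∈ A.finWinRegion W := by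
  let S : A.System (A.finWinRegion W) :=
    ⟨Unit, fun _ => x, fun _ _ => False, False.elim, fun _ => h.mono fun _ _ => .inl⟩
  have : Finite S.State := inferInstanceAs (Finite Unit)
  exact S.pos_mem_finWinRegion hA hW (fun s hs => (hs 0).elim) ()

theorem subset_finWinRegion_of_finite (hA : A.FinitelyBranching) (hW : PrefixIndependent W)
    {M : Set α} (hM : M.Finite) {r : α → α → Prop}
    (hr : ∀ q ∈ M, A.Forces q (A.finWinRegion W ∪ {q' ∈ M | r q q'}))
    (hwin : ∀ s : ℕ → α, (∀ i, s i ∈ M) → (∀ i, A.step (s i) (s (i + 1))) →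
      (∀ i, r (s i) (s (i + 1))) → s ∈ W) :
    M ⊆ A.finWinRegion W := by
  let S : A.System (A.finWinRegion W) :=
    { State := M
      pos := Subtype.val
      next q q' := A.step q q' ∧ r q q'
      step_of_next := And.left
      forces q := (hr q q.2).mono fun q' hstep hq' => hq'.imp_right fun hq' =>
        ⟨⟨q', hq'.1⟩, ⟨hstep, hq'.2⟩, rfl⟩ }
  have : Finite S.State := hM
  exact fun q hq => S.pos_mem_finWinRegion hA hW
    (fun s hs => hwin _ (fun i => (s i).2) (fun i => (hs i).1) fun i => (hs i).2) ⟨q, hq⟩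

theorem System.exists_next_of_notMem (hA : A.FinitelyBranching) (hW : PrefixIndependent W)
    (S : A.System (A.finWinRegion W)) {x : S.State} (hx : S.pos x ∉ A.finWinRegion W) :
    ∃ y, S.next x y := by
  by_contra! hnone
  exact hx <| mem_finWinRegion_of_forces hA hW <| (S.forces x).mono fun q _ hq =>
    hq.resolve_right fun ⟨y, hy, _⟩ => hnone y hy

theorem exists_trap {ι : Type*} [Countable ι] (hA : A.FinitelyBranching)
    (hW : PrefixIndependent W) {P : ι → Set α}
    (hP : ∀ s ∈ W, ∃ n, ∀ᶠ i in atTop, s i ∈ P n) (hx : x ∈ A.winRegion W)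
    (hx' : x ∉ A.finWinRegion W) :
    ∃ n, ∃ S : A.System (A.finWinRegion W),
      Nonempty S.State ∧ S.Wins W ∧ ∀ y, S.pos y ∈ P n \ A.finWinRegion W := by
  obtain ⟨S, hS, x, rfl⟩ := hx
  let S₁ : A.System (A.finWinRegion W) := S.restrict (S.pos · ∉ A.finWinRegion W)
    (Set.empty_subset _) fun y z _ _ => (em _).symm
  have hS₁ : S₁.Wins W := hS.restrict _ _
  have : Nonempty S₁.State := ⟨⟨x, hx'⟩⟩
  obtain ⟨n, y, hy⟩ := exists_forall_reachable_of_eventually (P := fun n y => S₁.pos y ∈ P n)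
    (fun y => S₁.exists_next_of_notMem hA hW y.2) fun s hs => hP _ (hS₁ s hs)
  exact ⟨n, S₁.restrict (Relation.ReflTransGen S₁.next y) subset_rfl
      fun z z' hz hz' => .inl (hz.tail hz'),
    ⟨⟨y, .refl⟩⟩, hS₁.restrict _ _, fun z => ⟨hy z.1 z.2, z.1.2⟩⟩

end Objective

theorem System.exists_rank_of_recurrent (hA : A.FinitelyBranching) (S : A.System T)
    (hC : ∀ s, S.IsRun s → ∃ i, S.pos (s i) ∈ C) :
    ∃ ρ : α → ℕ, ∀ x,
      A.Forces (S.pos x) (T ∪ {q ∈ Set.range S.pos | S.pos x ∈ C ∨ ρ q < ρ (S.pos x)}) := by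
  obtain ⟨ρ, hρ⟩ := A.exists_rank_attractor (Set.range S.pos) C T
  set B := ⋃ n, A.attractor (Set.range S.pos) C T n
  have hescape (x : S.State) (hx : S.pos x ∉ B) : S.pos x ∉ C ∧ ∃ y, S.pos y ∉ B ∧ S.next x y := by
    obtain ⟨hxC, hforces⟩ := notMem_and_forces_of_notMem_attractor hA (Set.mem_range_self x) hx
    obtain ⟨_, ⟨hqT | ⟨y, hy, rfl⟩, hq⟩, -⟩ := (S.forces x).exists_step_inter hforces
    · exact (hq (.inl hqT)).elim
    · exact ⟨hxC, y, fun hyB => hq (.inr hyB), hy⟩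
  have hB (x : S.State) : S.pos x ∈ B := by
    by_contra hx
    obtain ⟨s, -, hs⟩ := exists_chain (r := fun x y : {x // S.pos x ∉ B} => S.next x y)
      (fun x => by
        obtain ⟨-, y, hy, hxy⟩ := hescape x x.2
        exact ⟨⟨y, hy⟩, hxy⟩) ⟨x, hx⟩
    obtain ⟨i, hi⟩ := hC (fun i => (s i).1) hs
    exact (hescape _ (s i).2).1 hi
  refine ⟨ρ, fun x => ?_⟩
  rcases hρ _ (hB x) with hx | hforces
  · exact (S.forces x).mono fun _ _ hq => hq.imp_right fun ⟨y, _, hy⟩ => ⟨⟨y, hy⟩, .inl hx⟩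
  · exact hforces.mono fun _ _ hq => hq.imp_right fun hq => ⟨hq.1, .inr hq.2⟩

end Arena

namespace GameGraph

variable {V : Type} {G : GameGraph V} {Lo Hi : Set ℤ} {a b : ℤ}

/-! ## Configurations -/

/-- The arena whose positions are the configurations: the current vertex together with the sum of
the weights seen so far. Eve is the player. -/
def configArena (G : GameGraph V) : Arena (V × ℤ) where
  step p q := G.E p.1 q.1 ∧ q.2 = p.2 + G.w p.1 q.1
  own := {p | p.1 ∈ G.Eve}
  exists_step p := (G.succ p.1).imp' (fun u => (u, p.2 + G.w p.1 u)) fun _ hu => ⟨hu, rfl⟩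

theorem finitelyBranching_configArena [Finite V] (G : GameGraph V) :
    G.configArena.FinitelyBranching := fun p =>
  (Set.finite_range fun u => (u, p.2 + G.w p.1 u)).subset fun q hq => ⟨q.1, Prod.ext rfl hq.2.symm⟩

theorem finite_of_forall_mem_Icc [Finite V] {M : Set (V × ℤ)} (h : ∀ q ∈ M, q.2 ∈ Set.Icc a b) :
    M.Finite :=
  (Set.finite_univ.prod (Set.finite_Icc a b)).subset fun q hq => ⟨trivial, h q hq⟩

theorem exists_weight_bound [Finite V] (G : GameGraph V) :
    ∃ W : ℕ, ∀ p q, G.configArena.step p q → q.2 ≤ p.2 + W ∧ p.2 ≤ q.2 + W := by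
  obtain ⟨W, hW⟩ := (Set.finite_range fun e : V × V => (G.w e.1 e.2).natAbs).bddAbove
  refine ⟨W, fun p q hpq => ?_⟩
  have : (G.w p.1 q.1).natAbs ≤ W := hW ⟨(p.1, q.1), rfl⟩
  have := hpq.2
  lia

/-- The integer sequences whose inferior limit lies between an element of `Lo` and an element of
`Hi`. -/
def intervalObjective (Lo Hi : Set ℤ) : Set (ℕ → ℤ) :=
  {c | ∃ a ∈ Lo, ∃ b ∈ Hi, (∀ᶠ k in atTop, a ≤ c k) ∧ ∃ᶠ k in atTop, c k ≤ b}

/-- The sequences of configurations whose weight sums satisfy `intervalObjective Lo Hi`. -/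
def configObjective (V : Type) (Lo Hi : Set ℤ) : Set (ℕ → V × ℤ) :=
  {s | (fun k => (s k).2) ∈ intervalObjective Lo Hi}

theorem prefixIndependent_configObjective :
    Arena.PrefixIndependent (configObjective V Lo Hi) := fun s m => by
  have heventually (p : ℕ → Prop) : (∀ᶠ k in atTop, p (k + m)) ↔ ∀ᶠ k in atTop, p k := by
    rw [← eventually_map (m := (· + m)), map_add_atTop_eq_nat]
  have hfrequently (p : ℕ → Prop) : (∃ᶠ k in atTop, p (k + m)) ↔ ∃ᶠ k in atTop, p k :=
    not_congr (heventually fun k => ¬ p k)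
  exact exists_congr fun a => and_congr_right' <| exists_congr fun b => and_congr_right' <|
    and_congr (heventually fun k => a ≤ (s k).2) (hfrequently fun k => (s k).2 ≤ b)

/-- The configurations from which Eve has a finite-memory strategy for `configObjective`. -/
abbrev finWinConfigs (G : GameGraph V) (Lo Hi : Set ℤ) : Set (V × ℤ) :=
  G.configArena.finWinRegion (configObjective V Lo Hi)

/-! ## Intervals bounded above -/

theorem pos_mem_finWinRegion_of_isGreatest [Finite V] (ha : a ∈ Lo) (hb : IsGreatest Hi b)
    {S : G.configArena.System (G.finWinConfigs Lo Hi)} (hS : S.Wins (configObjective V Lo Hi))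
    (hlow : ∀ x, a ≤ (S.pos x).2) (x₀ : S.State) : S.pos x₀ ∈ G.finWinConfigs Lo Hi := by
  have hvisit (s) (hs : S.IsRun s) : ∃ i, S.pos (s i) ∈ {q : V × ℤ | q.2 ≤ b} := by
    obtain ⟨-, -, b', hb', -, hfreq⟩ := hS s hs
    exact hfreq.exists.imp fun i hi => le_trans hi (hb.2 hb')
  obtain ⟨W, hW⟩ := G.exists_weight_bound
  obtain ⟨ρ, hρ⟩ := S.exists_rank_of_recurrent G.finitelyBranching_configArena hvisit
  let pot : V × ℤ → ℤ := fun q => q.2 + W * ρ q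
  have hstart : ({q ∈ Set.range S.pos | q.2 ≤ b + W} ∪ {S.pos x₀}).Finite := by
    refine .union (finite_of_forall_mem_Icc (a := a) (b := b + W) ?_) (Set.finite_singleton _)
    rintro _ ⟨⟨x, rfl⟩, hx⟩
    exact ⟨hlow x, hx⟩
  obtain ⟨K, hK⟩ := (hstart.image pot).bddAbove
  have hK {q} (hq : q ∈ {q ∈ Set.range S.pos | q.2 ≤ b + W} ∪ {S.pos x₀}) : pot q ≤ K :=
    hK ⟨q, hq, rfl⟩
  refine Arena.subset_finWinRegion_of_finite (M := {q ∈ Set.range S.pos | pot q ≤ K})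
    (r := fun q q' => q.2 ≤ b ∨ ρ q' < ρ q) G.finitelyBranching_configArena
    prefixIndependent_configObjective ?_ ?_ ?_ ⟨⟨x₀, rfl⟩, hK (.inr rfl)⟩
  · refine finite_of_forall_mem_Icc (a := a) (b := K) ?_
    rintro _ ⟨⟨x, rfl⟩, hx⟩
    exact ⟨hlow x, le_trans (le_add_of_nonneg_right (by positivity)) hx⟩
  · rintro _ ⟨⟨x, rfl⟩, hx⟩
    refine (hρ x).mono fun q hstep hq => hq.imp_right fun ⟨hqS, hq⟩ => ⟨⟨hqS, ?_⟩, hq⟩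
    have hqW := (hW _ _ hstep).1
    rcases hq with hxb | hlt
    · exact hK (.inl ⟨hqS, hqW.trans (Int.add_le_add_right hxb W)⟩)
    · calc pot q ≤ (S.pos x).2 + W + W * ρ q := Int.add_le_add_right hqW _
        _ = (S.pos x).2 + W * (ρ q + 1) := by ring
        _ ≤ (S.pos x).2 + W * ρ (S.pos x) := by gcongr; exact_mod_cast hlt
        _ ≤ K := hx
  · intro s hs _ hr
    refine ⟨a, ha, b, hb.1, .of_forall fun k => ?_,
      frequently_of_forall_or_lt (ρ := fun k => ρ (s k)) hr⟩
    obtain ⟨⟨x, hx⟩, -⟩ := hs k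
    exact (hlow x).trans_eq (congrArg Prod.snd hx)

/-! ## Shifting the sum -/

/-- The configuration with `d` added to its sum. -/
def shift (d : ℤ) (q : V × ℤ) : V × ℤ := (q.1, q.2 + d)

theorem shift_surjective (d : ℤ) : Function.Surjective (shift d : V × ℤ → V × ℤ) := fun q =>
  ⟨(q.1, q.2 - d), Prod.ext rfl (sub_add_cancel q.2 d)⟩

theorem shift_sub (v : V) (c c' : ℤ) : shift (c' - c) (v, c) = (v, c') :=
  Prod.ext rfl (add_sub_cancel c c')

theorem step_shift_iff {d : ℤ} {p q : V × ℤ} :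
    G.configArena.step (shift d p) (shift d q) ↔ G.configArena.step p q :=
  and_congr_right' (by dsimp only [shift]; lia)

theorem forces_shift_iff {d : ℤ} {q : V × ℤ} {U : Set (V × ℤ)} :
    G.configArena.Forces (shift d q) U ↔ G.configArena.Forces q (shift d ⁻¹' U) :=
  and_congr
    (imp_congr_right fun _ => (shift_surjective d).exists.trans <|
      exists_congr fun _ => and_congr_right' step_shift_iff)
    (imp_congr_right fun _ => (shift_surjective d).forall.trans <|
      forall_congr' fun _ => imp_congr_left step_shift_iff)

theorem swap_forces_shift_iff {d : ℤ} {q : V × ℤ} {U : Set (V × ℤ)} :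
    G.configArena.swap.Forces (shift d q) U ↔ G.configArena.swap.Forces q (shift d ⁻¹' U) := by
  rw [← compl_compl U, ← Arena.not_forces_iff, forces_shift_iff, Set.preimage_compl,
    Arena.not_forces_iff, compl_compl, compl_compl]

/-- Sets of configurations that are stable under increasing the sum. -/
def SumUpper (U : Set (V × ℤ)) : Prop :=
  ∀ v, IsUpperSet {c | (v, c) ∈ U}

theorem SumUpper.shift_mem {U : Set (V × ℤ)} (hU : SumUpper U) {d : ℤ} (hd : 0 ≤ d) {q : V × ℤ}
    (hq : q ∈ U) : shift d q ∈ U :=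
  hU q.1 (le_add_of_nonneg_right hd) hq

theorem SumUpper.eventually_notMem {U : Set (V × ℤ)} (hU : SumUpper U) {v : V} {c : ℤ}
    (h : (v, c) ∉ U) : ∀ᶠ c in atBot, (v, c) ∉ U :=
  eventually_atBot.2 ⟨c, fun _ hc hmem => h (hU v hc hmem)⟩

theorem SumUpper.forces {U : Set (V × ℤ)} (hU : SumUpper U) :
    SumUpper {q | G.configArena.Forces q U} := fun v c c' hc h => by
  rw [Set.mem_ofPred_eq, Set.mem_ofPred_eq, ← shift_sub v c c', forces_shift_iff]
  exact Arena.Forces.mono h fun _ _ hq => hU.shift_mem (sub_nonneg.2 hc) hq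

theorem sumUpper_finWinConfigs : SumUpper (G.finWinConfigs Lo Set.univ) := by
  rintro v c c' hc ⟨S, hfin, hS, x, hx⟩
  have hd : 0 ≤ c' - c := sub_nonneg.2 hc
  let S' : G.configArena.System ∅ :=
    { S with
      pos := shift (c' - c) ∘ S.pos
      step_of_next := fun h => step_shift_iff.2 (S.step_of_next h)
      forces := fun y => forces_shift_iff.2 <| (S.forces y).mono fun q _ hq =>
        hq.imp_right fun ⟨z, hz, hzq⟩ => ⟨z, hz, congrArg _ hzq⟩ }
  refine ⟨S', hfin, fun s hs => ?_, x, (congrArg _ hx).trans (shift_sub v c c')⟩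
  obtain ⟨a, ha, b, -, hev, hfreq⟩ := hS s hs
  exact ⟨a, ha, b + (c' - c), trivial, hev.mono fun k hk => hk.trans (le_add_of_nonneg_right hd),
    hfreq.mono fun k hk => Int.add_le_add_right hk _⟩

/-! ## Climbing -/

/-- The configurations from which Adam can, moving from vertices of `R` only, raise the sum to a
nonnegative value in fewer than `n` moves or leave `L` within `n` moves. -/
def climb (G : GameGraph V) (R L : Set V) : ℕ → Set (V × ℤ) :=
  G.configArena.swap.attractor {q | q.1 ∈ R} {q | 0 ≤ q.2} {q | q.1 ∉ L}

variable {R L Φ : Set V}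

theorem sumUpper_climb (n : ℕ) : SumUpper (G.climb R L n) := by
  induction n with
  | zero => exact fun _ => isUpperSet_empty
  | succ n ih =>
    refine fun v c c' hc h => ⟨h.1, h.2.imp (fun h => le_trans h hc) fun h => ?_⟩
    rw [← shift_sub v c c', swap_forces_shift_iff]
    exact h.mono fun q _ hq => hq.imp_right (ih.shift_mem (sub_nonneg.2 hc))

theorem sumUpper_iUnion_climb : SumUpper (⋃ n, G.climb R L n) := by
  intro v c c' hc h
  obtain ⟨n, hn⟩ := Set.mem_iUnion.1 h
  exact Set.mem_iUnion.2 ⟨n, sumUpper_climb n v hc hn⟩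

/-- The vertices from which Adam can climb by an arbitrarily large amount. -/
def climbVertices (G : GameGraph V) (R L : Set V) : Set V :=
  {v | ∀ c, (v, c) ∈ ⋃ n, G.climb R L n}

theorem exists_forall_le_notMem_climb [Finite V] (G : GameGraph V) (R L : Set V) :
    ∃ c₀ ≤ 0, ∀ v ∉ G.climbVertices R L, ∀ c ≤ c₀, ∀ n, (v, c) ∉ G.climb R L n := by
  have h : ∀ᶠ c in atBot, ∀ v ∉ G.climbVertices R L, (v, c) ∉ ⋃ n, G.climb R L n := by
    refine eventually_all.2 fun v => ?_
    by_cases hv : v ∈ G.climbVertices R L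
    · exact .of_forall fun c hv' => absurd hv hv'
    · obtain ⟨c, hc⟩ := not_forall.1 hv
      exact (sumUpper_iUnion_climb.eventually_notMem hc).mono fun c hc _ => hc
  obtain ⟨c₀, hc₀⟩ := eventually_atBot.1 (h.and (eventually_le_atBot 0))
  exact ⟨c₀, (hc₀ c₀ le_rfl).2, fun v hv c hc n hn =>
    (hc₀ c hc).1 v hv (Set.mem_iUnion.2 ⟨n, hn⟩)⟩

theorem mem_climb_of_shift_mem_climb {W c₀ : ℤ}
    (hW : ∀ p q, G.configArena.step p q → q.2 ≤ p.2 + W) (hc₀ : c₀ ≤ 0)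
    (hlow : ∀ v ∉ Φ, ∀ c ≤ c₀, ∀ n, (v, c) ∉ G.climb R L n) (n : ℕ) {q : V × ℤ} (hq : q.2 < W)
    (h : shift (c₀ - W) q ∈ G.climb R L n) : q ∈ G.climb Φ L n := by
  induction n generalizing q with
  | zero => exact h.elim
  | succ n ih =>
    have hqlow : (shift (c₀ - W) q).2 < c₀ := by dsimp only [shift]; lia
    refine ⟨by_contra fun hqΦ => hlow q.1 hqΦ _ hqlow.le _ h, or_iff_not_imp_left.2 fun hneg => ?_⟩
    rcases h.2 with hnonneg | hforces
    · exact absurd hnonneg (hqlow.trans_le hc₀).not_ge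
    · refine (swap_forces_shift_iff.1 hforces).mono fun q' hstep => Or.imp_right <| ih ?_
      exact (hW q q' hstep).trans_lt (add_lt_of_neg_left W (not_le.1 hneg))

-- While climbing far below zero Adam never has to leave the vertices from which he can climb
-- arbitrarily far, since everywhere else the sum is already too low.
theorem exists_mem_climb_climbVertices [Finite V] {v : V} (hv : v ∈ G.climbVertices R L) :
    ∃ n, (v, -1) ∈ G.climb (G.climbVertices R L) L n := by
  obtain ⟨W, hW⟩ := G.exists_weight_bound
  obtain ⟨c₀, hc₀, hlow⟩ := G.exists_forall_le_notMem_climb R L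
  obtain ⟨n, hn⟩ := Set.mem_iUnion.1 (hv (-1 + (c₀ - W)))
  exact ⟨n, mem_climb_of_shift_mem_climb (fun p q h => (hW p q h).1) hc₀ hlow n
    (by dsimp only; lia) hn⟩

theorem exists_forall_mem_climb [Finite V] {c : ℤ}
    (hΦ : ∀ v ∈ Φ, ∃ n, (v, c) ∈ G.climb R L n) : ∃ N, ∀ v ∈ Φ, (v, c) ∈ G.climb R L N := by
  have h : ∀ᶠ n in atTop, ∀ v ∈ Φ, (v, c) ∈ G.climb R L n := eventually_all.2 fun v => by
    by_cases hv : v ∈ Φ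
    · obtain ⟨n, hn⟩ := hΦ v hv
      exact eventually_atTop.2 ⟨n, fun m hm _ => Arena.attractor_mono _ _ _ _ hm hn⟩
    · exact .of_forall fun n hv' => absurd hv' hv
  exact h.exists

theorem fst_mem_of_mem_climb {n : ℕ} {v : V} {c : ℤ} (h : (v, c) ∈ G.climb R L n) : v ∈ R :=
  Arena.attractor_subset (P := {q : V × ℤ | q.1 ∈ R}) h

theorem exists_next_mem_climb {T : Set (V × ℤ)} {S : G.configArena.System T}
    (hT : ∀ q ∈ T, q.1 ∈ L \ R) (hL : ∀ x, (S.pos x).1 ∈ L) {x : S.State} {n : ℕ} {c : ℤ}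
    (hc : c < 0) (hx : ((S.pos x).1, c) ∈ G.climb R L (n + 1)) :
    ∃ y, S.next x y ∧ ((S.pos y).1, c + ((S.pos y).2 - (S.pos x).2)) ∈ G.climb R L n := by
  have hforces := hx.2.resolve_left (not_le.2 hc)
  rw [← shift_sub _ (S.pos x).2, swap_forces_shift_iff] at hforces
  obtain ⟨q, ⟨hqS, hq⟩, -⟩ := (S.forces x).exists_step_inter hforces
  rcases hqS with hqT | ⟨y, hy, rfl⟩
  · rcases hq with hqL | hqR
    · exact absurd (hT q hqT).1 hqL
    · exact absurd (fst_mem_of_mem_climb hqR) (hT q hqT).2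
  · refine ⟨y, hy, ?_⟩
    rcases hq with hyL | hmem
    · exact absurd (hL y) hyL
    · have hmem : shift (c - (S.pos x).2) (S.pos y) ∈ G.climb R L n := hmem
      rwa [show shift (c - (S.pos x).2) (S.pos y) =
        ((S.pos y).1, c + ((S.pos y).2 - (S.pos x).2)) from
          Prod.ext rfl (by dsimp only [shift]; ring)] at hmem

-- Adam climbs to a nonnegative value and restarts at `-1`. The potential `ψ` is the actual sum
-- minus the climbing sum, which stays bounded below because each round has at most `N` moves.
theorem exists_isRun_tendsto_atTop [Finite V] {T : Set (V × ℤ)} {S : G.configArena.System T}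
    (hT : ∀ q ∈ T, q.1 ∈ L \ R) (hL : ∀ x, (S.pos x).1 ∈ L)
    (hR : ∀ v ∈ R, ∃ n, (v, -1) ∈ G.climb R L n) {x₀ : S.State} (hx₀ : (S.pos x₀).1 ∈ R) :
    ∃ s, S.IsRun s ∧ Tendsto (fun k => (S.pos (s k)).2) atTop atTop := by
  obtain ⟨W, hW⟩ := G.exists_weight_bound
  obtain ⟨N, hN⟩ := exists_forall_mem_climb hR
  let Z := {z : S.State × ℕ × ℤ // ((S.pos z.1).1, z.2.2) ∈ G.climb R L z.2.1 ∧ z.2.2 < 0 ∧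
    W * z.2.1 - z.2.2 ≤ W * N + 1}
  let ψ : Z → ℤ := fun z => (S.pos z.1.1).2 - z.1.2.2
  have hstart (y : S.State) (hy : (S.pos y).1 ∈ R) :
      ∃ z : Z, z.1.1 = y ∧ ψ z = (S.pos y).2 + 1 :=
    ⟨⟨(y, N, -1), hN _ hy, by simp, by simp⟩, rfl, by simp [ψ]⟩
  have hnext (z : Z) : ∃ z' : Z, S.next z.1.1 z'.1.1 ∧
      (ψ z < ψ z' ∨ ψ z' = ψ z ∧ z'.1.2.1 < z.1.2.1) := by
    obtain ⟨⟨x, _ | n, c⟩, hx, hc, hbound⟩ := z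
    · exact hx.elim
    obtain ⟨y, hxy, hy⟩ := exists_next_mem_climb hT hL hc hx
    rcases lt_or_ge (c + ((S.pos y).2 - (S.pos x).2)) 0 with hneg | hnonneg
    · have hdrop := (hW _ _ (S.step_of_next hxy)).2
      refine ⟨⟨(y, n, _), hy, hneg, ?_⟩, hxy, .inr ⟨?_, n.lt_succ_self⟩⟩
      · push_cast at hbound ⊢
        linarith
      · dsimp only [ψ]
        ring
    · obtain ⟨z', rfl, hz'⟩ := hstart y (fst_mem_of_mem_climb hy)
      exact ⟨z', hxy, .inl (by rw [hz']; dsimp only [ψ]; linarith)⟩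
  obtain ⟨z₀, -⟩ := hstart x₀ hx₀
  obtain ⟨s, -, hs⟩ := exists_chain hnext z₀
  refine ⟨fun i => (s i).1.1, fun i => (hs i).1, ?_⟩
  have hψ : Tendsto (fun i => ψ (s i)) atTop atTop :=
    tendsto_atTop_of_lex (ρ := fun i => (s i).1.2.1) fun i => (hs i).2
  refine tendsto_atTop_mono (fun i => ?_) (tendsto_atTop_add_const_right _ (-(W * N + 1) : ℤ) hψ)
  have hbound := (s i).2.2.2
  have : (0 : ℤ) ≤ W * (s i).1.2.1 := by positivity
  dsimp only [ψ]
  linarith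

theorem climbVertices_eq_empty [Finite V] {T : Set (V × ℤ)} {S : G.configArena.System T}
    (hS : S.Wins (configObjective V Lo Hi)) (hL : L = Prod.fst '' (Set.range S.pos ∪ T))
    (hR : R = L \ Prod.fst '' T) : G.climbVertices R L = ∅ := by
  have hsub (v : V) (hv : v ∈ G.climbVertices R L) : v ∈ L \ Prod.fst '' T := by
    obtain ⟨n, hn⟩ := Set.mem_iUnion.1 (hv 0)
    exact hR ▸ fst_mem_of_mem_climb hn
  have hT (q) (hq : q ∈ T) : q.1 ∈ L \ G.climbVertices R L :=
    ⟨hL ▸ ⟨q, .inr hq, rfl⟩, fun h => (hsub _ h).2 ⟨q, hq, rfl⟩⟩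
  have hpos (x : S.State) : (S.pos x).1 ∈ L := hL ▸ ⟨_, .inl ⟨x, rfl⟩, rfl⟩
  refine Set.eq_empty_of_forall_notMem fun v hv => ?_
  obtain ⟨q, hq, rfl⟩ : v ∈ Prod.fst '' (Set.range S.pos ∪ T) := hL ▸ (hsub v hv).1
  rcases hq with ⟨x, rfl⟩ | hq
  · obtain ⟨s, hs, htendsto⟩ :=
      exists_isRun_tendsto_atTop hT hpos (fun _ => exists_mem_climb_climbVertices) hv
    obtain ⟨-, -, b, -, -, hfreq⟩ := hS s hs
    exact hfreq ((htendsto.eventually_gt_atTop b).mono fun k => not_le.2)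
  · exact (hT q hq).2 hv

/-! ## Intervals unbounded above -/

theorem lt_and_forces_of_notMem_climb [Finite V] {K : ℤ} {q : V × ℤ} (hq : q.1 ∈ R)
    (h : shift (-K) q ∉ ⋃ n, G.climb R L n) :
    q.2 < K ∧ G.configArena.Forces q {q' | q'.1 ∈ L ∧ shift (-K) q' ∉ ⋃ n, G.climb R L n} := by
  obtain ⟨hneg, hforces⟩ := Arena.notMem_and_forces_of_notMem_attractor (x := shift (-K) q)
    (A := G.configArena.swap) (P := {q : V × ℤ | q.1 ∈ R}) G.finitelyBranching_configArena hq h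
  rw [Arena.swap_swap, forces_shift_iff] at hforces
  refine ⟨sub_neg.1 (not_le.1 hneg), hforces.mono fun q' _ hq' => ?_⟩
  exact ⟨not_not.1 fun h => hq' (.inl h), fun h => hq' (.inr h)⟩

/-- The configurations obtained from those in `U` by increasing the sum. -/
def raise (U : Set (V × ℤ)) : Set (V × ℤ) :=
  {q | ∃ c ≤ q.2, (q.1, c) ∈ U}

theorem sumUpper_raise (U : Set (V × ℤ)) : SumUpper (raise U) :=
  fun _ _ _ hc ⟨c, hcc, h⟩ => ⟨c, le_trans hcc hc, h⟩

theorem subset_raise (U : Set (V × ℤ)) : U ⊆ raise U := fun q hq => ⟨q.2, le_rfl, hq⟩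

theorem SumUpper.raise_subset {U : Set (V × ℤ)} (hU : SumUpper U) : raise U ⊆ U :=
  fun q ⟨_, hc, h⟩ => hU q.1 hc h

theorem eventually_forall_mem_raise [Finite V] (U : Set (V × ℤ)) :
    ∀ᶠ c in atTop, ∀ v ∈ Prod.fst '' U, (v, c) ∈ raise U := by
  refine eventually_all.2 fun v => ?_
  by_cases hv : v ∈ Prod.fst '' U
  · obtain ⟨⟨v, c⟩, h, rfl⟩ := hv
    exact eventually_atTop.2 ⟨c, fun c' hc' _ => ⟨c, hc', h⟩⟩
  · exact .of_forall fun c h => absurd h hv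

theorem forces_raise {T : Set (V × ℤ)} {S : G.configArena.System T} {q : V × ℤ}
    (hq : q ∈ raise (Set.range S.pos)) :
    G.configArena.Forces q (raise (Set.range S.pos ∪ T)) := by
  obtain ⟨c, hc, x, hx⟩ := hq
  have hforces : G.configArena.Forces (S.pos x) (raise (Set.range S.pos ∪ T)) :=
    (S.forces x).mono fun q _ hq => subset_raise _ (hq.symm.imp_left fun ⟨y, _, hy⟩ => ⟨y, hy⟩)
  rw [hx] at hforces
  exact (sumUpper_raise _).forces q.1 hc hforces

theorem exists_forall_le_notMem_iUnion_climb [Finite V] {T : Set (V × ℤ)}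
    {S : G.configArena.System T} (hS : S.Wins (configObjective V Lo Hi))
    (hL : L = Prod.fst '' (Set.range S.pos ∪ T)) (hR : R = L \ Prod.fst '' T) :
    ∃ c₀ ≤ 0, ∀ q : V × ℤ, q.2 ≤ c₀ → q ∉ ⋃ n, G.climb R L n := by
  obtain ⟨c₀, hneg, hc₀⟩ := G.exists_forall_le_notMem_climb R L
  rw [climbVertices_eq_empty hS hL hR] at hc₀
  exact ⟨c₀, hneg, fun q hq h => (Set.mem_iUnion.1 h).elim (hc₀ q.1 (Set.notMem_empty _) _ hq)⟩

-- From the raised configurations Eve can replay `S`, and where the sum is high she can instead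
-- avoid the climbing set shifted up to `K`, which caps the sum at `K`.
theorem exists_bounded_trap [Finite V] {T : Set (V × ℤ)} (hT : SumUpper T)
    {S : G.configArena.System T} (hS : S.Wins (configObjective V Lo Hi))
    (hlow : ∀ x, a ≤ (S.pos x).2) (x₀ : S.State) :
    ∃ K, ∃ M : Set (V × ℤ), (∀ q ∈ M, q.2 ∈ Set.Icc a K) ∧
      (∀ q ∈ M, G.configArena.Forces q (T ∪ M)) ∧ S.pos x₀ ∈ T ∪ M := by
  let U := Set.range S.pos ∪ T
  let L := Prod.fst '' U
  let R := L \ Prod.fst '' T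
  obtain ⟨W, hW⟩ := G.exists_weight_bound
  obtain ⟨c₀, hneg, hc₀⟩ := exists_forall_le_notMem_iUnion_climb hS (L := L) (R := R) rfl rfl
  obtain ⟨H, hH⟩ := eventually_atTop.1 <|
    (eventually_forall_mem_raise U).and (eventually_forall_mem_raise T)
  obtain ⟨K, hKH, hKx₀⟩ : ∃ K, H + 2 * W - c₀ ≤ K ∧ (S.pos x₀).2 - c₀ ≤ K :=
    ⟨_, le_max_left _ _, le_max_right _ _⟩
  let B := {q : V × ℤ | shift (-K) q ∈ ⋃ n, G.climb R L n}
  have hB {q : V × ℤ} (hq : q.2 ≤ K + c₀) : q ∉ B :=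
    hc₀ (shift (-K) q) (by dsimp only [shift]; lia)
  have hR {q} (hq : q ∈ raise U \ T) (hqH : H ≤ q.2) : q.1 ∈ R := by
    obtain ⟨⟨c, -, hc⟩, hqT⟩ := hq
    exact ⟨⟨_, hc, rfl⟩, fun h => hqT (hT.raise_subset ((hH _ hqH).2 _ h))⟩
  have hraise {q} (hq : q ∈ raise U \ T) : q ∈ raise (Set.range S.pos) := by
    obtain ⟨⟨c, hc, hx | hcT⟩, hqT⟩ := hq
    · exact ⟨c, hc, hx⟩
    · exact absurd (hT q.1 hc hcT) hqT
  refine ⟨K, (raise U \ T) \ B, fun q hq => ?_, fun q hq => ?_, or_iff_not_imp_left.2 fun hx₀ =>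
    ⟨⟨subset_raise _ (.inl ⟨x₀, rfl⟩), hx₀⟩, hB (by lia)⟩⟩
  · obtain ⟨c, hc, x, hx⟩ := hraise hq.1
    refine ⟨((hlow x).trans_eq (congrArg Prod.snd hx)).trans hc, not_lt.1 fun hqK => ?_⟩
    exact (lt_and_forces_of_notMem_climb (hR hq.1 (by lia)) hq.2).1.not_gt hqK
  · suffices h : G.configArena.Forces q (raise U \ B) from
      h.mono fun q' _ hq' => or_iff_not_imp_left.2 fun hqT => ⟨⟨hq'.1, hqT⟩, hq'.2⟩
    rcases lt_or_ge q.2 (H + W) with hqlow | hqhigh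
    · refine (forces_raise (hraise hq.1)).mono fun q' hstep hq' => ⟨hq', hB ?_⟩
      linarith [(hW q q' hstep).1]
    · refine (lt_and_forces_of_notMem_climb (hR hq.1 (by lia)) hq.2).2.mono
        fun q' hstep hq' => ⟨(hH q'.2 ?_).1 q'.1 hq'.1, hq'.2⟩
      linarith [(hW q q' hstep).2]

theorem pos_mem_finWinRegion_of_univ [Finite V] (ha : a ∈ Lo)
    {S : G.configArena.System (G.finWinConfigs Lo Set.univ)}
    (hS : S.Wins (configObjective V Lo Set.univ)) (hlow : ∀ x, a ≤ (S.pos x).2) (x₀ : S.State) :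
    S.pos x₀ ∈ G.finWinConfigs Lo Set.univ := by
  obtain ⟨K, M, hM, hforces, hx₀⟩ := exists_bounded_trap sumUpper_finWinConfigs hS hlow x₀
  refine hx₀.elim id fun hx₀ => Arena.subset_finWinRegion_of_finite (r := fun _ _ => True)
    G.finitelyBranching_configArena prefixIndependent_configObjective (finite_of_forall_mem_Icc hM)
    (fun q hq => (hforces q hq).mono fun _ _ => Or.imp_right fun h => ⟨h, trivial⟩)
    (fun s hs _ _ => ?_) hx₀
  exact ⟨a, ha, K, trivial, .of_forall fun k => (hM _ (hs k)).1,
    .of_forall fun k => (hM _ (hs k)).2⟩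

theorem winRegion_subset_finWinRegion [Finite V] (G : GameGraph V) (hHi : IsLowerSet Hi) :
    G.configArena.winRegion (configObjective V Lo Hi) ⊆ G.finWinConfigs Lo Hi := by
  intro q hq
  by_contra hq'
  obtain ⟨⟨a, ha⟩, S, ⟨x⟩, hS, hpos⟩ := Arena.exists_trap
    (P := fun (a : Lo) => {q : V × ℤ | a ≤ q.2}) G.finitelyBranching_configArena
    prefixIndependent_configObjective (fun s ⟨a, ha, _, _, hev, _⟩ => ⟨⟨a, ha⟩, hev⟩) hq hq'
  refine (hpos x).2 ?_
  by_cases hbdd : BddAbove Hi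
  · obtain ⟨s, -, hs⟩ := exists_chain
      (fun y => S.exists_next_of_notMem G.finitelyBranching_configArena
        prefixIndependent_configObjective (hpos y).2) x
    obtain ⟨-, -, b, hb, -⟩ := hS s hs
    exact pos_mem_finWinRegion_of_isGreatest ha
      ⟨Int.csSup_mem ⟨b, hb⟩ hbdd, fun _ => le_csSup hbdd⟩ hS (fun y => (hpos y).1) x
  · obtain rfl : Hi = Set.univ := Set.eq_univ_of_forall fun c => by
      obtain ⟨b, hb, hcb⟩ := not_bddAbove_iff.1 hbdd c
      exact hHi hcb.le hb
    exact pos_mem_finWinRegion_of_univ ha hS (fun y => (hpos y).1) x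

/-! ## Strategies and payoffs -/

theorem snd_eq_partialSum {q : ℕ → V × ℤ} (h0 : (q 0).2 = 0)
    (hq : ∀ i, G.configArena.step (q i) (q (i + 1))) (k : ℕ) :
    (q k).2 = G.partialSum (fun i => (q i).1) k := by
  induction k with
  | zero => exact h0
  | succ k ih => rw [(hq k).2, ih, partialSum, partialSum, Finset.sum_range_succ]

theorem mem_configObjective_iff {q : ℕ → V × ℤ} (h0 : (q 0).2 = 0)
    (hq : ∀ i, G.configArena.step (q i) (q (i + 1))) :
    q ∈ configObjective V Lo Hi ↔ G.partialSum (fun i => (q i).1) ∈ intervalObjective Lo Hi :=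
  iff_of_eq <| congrArg (· ∈ intervalObjective Lo Hi) (funext (snd_eq_partialSum h0 hq))

/-- A strategy as a system: the states are a history and the configuration that follows it. -/
def EveLegal.system {σ : List V → V} (hσ : G.EveLegal σ) : G.configArena.System ∅ where
  State := List V × (V × ℤ)
  pos := Prod.snd
  next x y := y.1 = x.1 ++ [x.2.1] ∧ G.configArena.step x.2 y.2 ∧
    (x.2.1 ∈ G.Eve → y.2.1 = σ (x.1 ++ [x.2.1]))
  step_of_next h := h.2.1
  forces x :=
    ⟨fun hx =>
        have hstep : G.configArena.step x.2 (σ (x.1 ++ [x.2.1]), x.2.2 + G.w x.2.1 _) :=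
          ⟨hσ _ _ hx, rfl⟩
        ⟨_, .inr ⟨(_, _), ⟨rfl, hstep, fun _ => rfl⟩, rfl⟩, hstep⟩,
      fun hx q hq => .inr ⟨(_, q), ⟨rfl, hq, fun hx' => absurd hx' hx⟩, rfl⟩⟩

theorem prefixList_succ (π : ℕ → V) (i : ℕ) :
    prefixList π (i + 1) = prefixList π i ++ [π (i + 1)] :=
  List.ofFn_succ_last

theorem EveLegal.append_eq_prefixList {σ : List V → V} {hσ : G.EveLegal σ}
    {s : ℕ → List V × (V × ℤ)} (hs : hσ.system.IsRun s) (h0 : (s 0).1 = []) (i : ℕ) :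
    (s i).1 ++ [(s i).2.1] = prefixList (fun i => (s i).2.1) i := by
  induction i with
  | zero => rw [h0]; rfl
  | succ i ih => rw [prefixList_succ, ← ih, (hs i).1]

theorem mem_winRegion_of_eveWins (h : G.EveWins fun π => G.partialSum π ∈ intervalObjective Lo Hi) :
    (G.init, 0) ∈ G.configArena.winRegion (configObjective V Lo Hi) := by
  obtain ⟨σ, hσ, hwin⟩ := h
  refine Arena.mem_winRegion_of_root prefixIndependent_configObjective hσ.system
    (show List V × (V × ℤ) from ([], (G.init, 0))) fun s hs hs0 => ?_
  refine (mem_configObjective_iff (congrArg (·.2.2) hs0) fun i => (hs i).2.1).2 <|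
    hwin _ ⟨congrArg (·.2.1) hs0, fun i => (hs i).2.1.1⟩ fun i hi => ?_
  exact ((hs i).2.2 hi).trans
    (congrArg σ (EveLegal.append_eq_prefixList hs (congrArg Prod.fst hs0) i))

theorem exists_policy (S : G.configArena.System ∅) :
    ∃ (o : S.State → V → V) (t : S.State → V → S.State), (∀ x v, G.E v (o x v)) ∧
      ∀ x u, G.E (S.pos x).1 u → ((S.pos x).1 ∈ G.Eve → u = o x (S.pos x).1) →
        S.next x (t x u) ∧ (S.pos (t x u)).1 = u := by
  have hmove (x : S.State) (v : V) : ∃ u, G.E v u ∧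
      (v ∈ G.Eve → (S.pos x).1 = v → ∃ y, S.next x y ∧ (S.pos y).1 = u) := by
    by_cases hv : v ∈ G.Eve ∧ (S.pos x).1 = v
    · obtain ⟨hv, rfl⟩ := hv
      obtain ⟨_, hq | ⟨y, hy, rfl⟩, hstep⟩ := (S.forces x).1 hv
      · exact hq.elim
      · exact ⟨_, hstep.1, fun _ _ => ⟨y, hy, rfl⟩⟩
    · exact (G.succ v).imp fun u hu => ⟨hu, fun hv' hx => absurd ⟨hv', hx⟩ hv⟩
  choose o ho hon using hmove
  have hanswer (x : S.State) (u : V) : ∃ y, G.E (S.pos x).1 u →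
      ((S.pos x).1 ∈ G.Eve → u = o x (S.pos x).1) → S.next x y ∧ (S.pos y).1 = u := by
    by_cases hu : G.E (S.pos x).1 u ∧ ((S.pos x).1 ∈ G.Eve → u = o x (S.pos x).1)
    · by_cases hx : (S.pos x).1 ∈ G.Eve
      · exact (hon x _ hx rfl).imp fun y hy _ _ => hu.2 hx ▸ hy
      · obtain hq | ⟨y, hy, hyu⟩ :=
          (S.forces x).2 hx (u, (S.pos x).2 + G.w (S.pos x).1 u) ⟨hu.1, rfl⟩
        · exact hq.elim
        · exact ⟨y, fun _ _ => ⟨hy, congrArg Prod.fst hyu⟩⟩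
    · exact ⟨x, fun h h' => absurd ⟨h, h'⟩ hu⟩
  choose t ht using hanswer
  exact ⟨o, t, ho, ht⟩

theorem eveWinsFM_of_mem_finWinConfigs [Finite V] (h : (G.init, 0) ∈ G.finWinConfigs Lo Hi) :
    G.EveWinsFM fun π => G.partialSum π ∈ intervalObjective Lo Hi := by
  obtain ⟨S, hfin, hS, x₀, hx₀⟩ := h
  obtain ⟨o, t, ho, ht⟩ := exists_policy S
  -- A machine has not yet read the current vertex when it moves, so its memory holds the state of
  -- `S` as a function of that vertex.
  let δ : (V → S.State) → V → V → S.State := fun m v u => t (m v) u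
  refine ⟨V → S.State, Fintype.ofFinite _, fun _ => x₀, δ, fun m v => o (m v) v,
    fun m v _ => ho (m v) v, fun π hπ hcons => ?_⟩
  let s : ℕ → S.State := fun i => memRun δ (fun _ => x₀) π i (π i)
  have hnext (i : ℕ) (hi : (S.pos (s i)).1 = π i) :
      S.next (s i) (s (i + 1)) ∧ (S.pos (s (i + 1))).1 = π (i + 1) :=
    ht (s i) (π (i + 1)) (hi ▸ hπ.2 i) fun h => by rw [hi] at h ⊢; exact hcons i h
  have hpos (i : ℕ) : (S.pos (s i)).1 = π i := by
    induction i with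
    | zero => exact (congrArg Prod.fst hx₀).trans hπ.1.symm
    | succ i ih => exact (hnext i ih).2
  have hrun : S.IsRun s := fun i => (hnext i (hpos i)).1
  have hwin := (mem_configObjective_iff (congrArg Prod.snd hx₀)
    fun i => S.step_of_next (hrun i)).1 (hS s hrun)
  exact (funext hpos : (fun i => (S.pos (s i)).1) = π) ▸ hwin

theorem eventually_le_of_coe_le_liminf {c : ℕ → ℤ} {x : ℝ} (hx : a < x + 1)
    (h : (x : EReal) ≤ liminf (fun k => ((c k : ℝ) : EReal)) atTop) : ∀ᶠ k in atTop, a ≤ c k := by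
  have hlt : (((a - 1 : ℤ) : ℝ) : EReal) < x := by
    rw [EReal.coe_lt_coe_iff]
    push_cast
    linarith
  refine (eventually_lt_of_lt_liminf (hlt.trans_le h)).mono fun k hk => ?_
  exact Int.sub_one_lt_iff.1 (by exact_mod_cast hk)

theorem frequently_le_of_liminf_le_coe {c : ℕ → ℤ} {x : ℝ} (hx : x < b + 1)
    (h : liminf (fun k => ((c k : ℝ) : EReal)) atTop ≤ x) : ∃ᶠ k in atTop, c k ≤ b := by
  have hlt : (x : EReal) < ((b + 1 : ℤ) : ℝ) := by
    rw [EReal.coe_lt_coe_iff]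
    exact_mod_cast hx
  refine (frequently_lt_of_liminf_lt (by isBoundedDefault) (h.trans_lt hlt)).mono fun k hk => ?_
  exact Int.lt_add_one_iff.1 (by exact_mod_cast hk)

theorem exists_mem_liminf_eq_iff {I : Set ℝ} (hI : I.OrdConnected) (c : ℕ → ℤ) :
    (∃ x : ℝ, x ∈ I ∧ liminf (fun k => ((c k : ℝ) : EReal)) atTop = x) ↔
      c ∈ intervalObjective ((↑) ⁻¹' (upperClosure I : Set ℝ))
        ((↑) ⁻¹' (lowerClosure I : Set ℝ)) := by
  constructor
  · rintro ⟨x, hx, hlim⟩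
    exact ⟨⌈x⌉, ⟨x, hx, Int.le_ceil x⟩, ⌊x⌋, ⟨x, hx, Int.floor_le x⟩,
      eventually_le_of_coe_le_liminf (Int.ceil_lt_add_one x) hlim.ge,
      frequently_le_of_liminf_le_coe (Int.lt_floor_add_one x) hlim.le⟩
  · rintro ⟨a, ⟨x, hx, hxa⟩, b, ⟨y, hy, hby⟩, hev, hfreq⟩
    have ha : ((a : ℝ) : EReal) ≤ liminf (fun k => ((c k : ℝ) : EReal)) atTop :=
      le_liminf_of_le (by isBoundedDefault) <| hev.mono fun k hk => by exact_mod_cast hk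
    have hb : liminf (fun k => ((c k : ℝ) : EReal)) atTop ≤ ((b : ℝ) : EReal) :=
      liminf_le_of_frequently_le (hfreq.mono fun k hk => by exact_mod_cast hk)
        (by isBoundedDefault)
    generalize liminf (fun k => ((c k : ℝ) : EReal)) atTop = z at ha hb
    lift z to ℝ using ⟨ne_top_of_le_ne_top (EReal.coe_ne_top _) hb,
      ne_bot_of_le_ne_bot (EReal.coe_ne_bot _) ha⟩
    rw [EReal.coe_le_coe_iff] at ha hb
    exact ⟨z, hI.out hx hy ⟨hxa.trans ha, hb.trans hby⟩, rfl⟩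

end GameGraph

/-- Let `(G, I)` be a single-interval total-sum game, where
`I ⊆ ℝ` is a (possibly unbounded) interval. If Eve has a winning strategy (ensuring
that `Total(π)` is (finite and) in `I` for every consistent play), then she has a
finite-memory winning strategy. -/
theorem stmt19 {V : Type} [Fintype V] (G : GameGraph V)
    (I : Set ℝ) (hconn : I.OrdConnected) :
    G.EveWins (fun π => ∃ x : ℝ, x ∈ I ∧ G.totalPayoff π = (x : EReal)) →
      G.EveWinsFM (fun π => ∃ x : ℝ, x ∈ I ∧ G.totalPayoff π = (x : EReal)) := by
  intro h
  simp only [GameGraph.totalPayoff, GameGraph.exists_mem_liminf_eq_iff hconn] at h ⊢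
  exact GameGraph.eveWinsFM_of_mem_finWinConfigs <| G.winRegion_subset_finWinRegion
    ((lowerClosure I).lower.preimage Int.cast_mono) (GameGraph.mem_winRegion_of_eveWins h)
end
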